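/- arXiv:1204.1635 — 6 statements merged into one kernel-verified Lean document; each statement's English description precedes it below -/
import Mathlib

section
/- Let 0 < μ < M be real numbers. Let {Ω_n} (n ≥ 1) be a sequence of open subsets of ℂ such that each Ω_n is simply connected, B(0,μ) ⊆ Ω_n ⊆ B(0,M) for all n, and the sequence of complements {ℂ \ Ω_n} is uniformly locally connected. For each n let Φ_n : 𝔻 → Ω_n be a holomorphic bijection with Φ_n(0) = 0 and Φ_n'(0) > 0. Then each Φ_n extends to a continuous map on the closed unit disk, the family of these extensions is equicontinuous on the closed unit disk, and there is a subsequence {Φ_{n(k)}} converging uniformly on the closed unit disk to a continuous map Φ such that the restriction of Φ to 𝔻 is injective and holomorphic, its image Ω = Φ(𝔻) is an open simply connected set, and the complement ℂ \ Ω is locally connected. -/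
open Complex Metric Set

/-- `b` and `c` are joined inside `A` by a continuum of diameter at most `ε`. -/
def JoinedByContinuumIn (A : Set ℂ) (b c : ℂ) (ε : ℝ) : Prop :=
  ∃ B : Set ℂ, B ⊆ A ∧ IsCompact B ∧ IsConnected B ∧ b ∈ B ∧ c ∈ B ∧ Metric.diam B ≤ ε

/-- A closed set `A ⊆ ℂ` is locally connected: for every `ε > 0` there is `δ > 0` such that
any two points of `A` at distance `< δ` are joined by a continuum in `A` of diameter `≤ ε`. -/
def LocallyConnectedSet (A : Set ℂ) : Prop :=
  ∀ ε > 0, ∃ δ > 0, ∀ b ∈ A, ∀ c ∈ A, dist b c < δ → JoinedByContinuumIn A b c ε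

/-- A sequence of closed sets is uniformly locally connected: `δ` may be chosen
independently of `n`. -/
def UnifLocallyConnectedSeq (A : ℕ → Set ℂ) : Prop :=
  ∀ ε > 0, ∃ δ > 0, ∀ n : ℕ, ∀ b ∈ A n, ∀ c ∈ A n, dist b c < δ →
    JoinedByContinuumIn (A n) b c ε

/-- A family of maps is equicontinuous on a set `S`:
`δ` depends only on `ε`, not on `n` nor on the points. -/
def EquicontinuousOnSet (Ψ : ℕ → ℂ → ℂ) (S : Set ℂ) : Prop :=
  ∀ ε > 0, ∃ δ > 0, ∀ x ∈ S, ∀ y ∈ S, dist x y < δ → ∀ n, dist (Ψ n x) (Ψ n y) < ε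

/-!
After a Cayley transform and a logarithm, small neighbourhoods of a point of the unit circle become
half-strips. By the length–area method (Wolff's lemma) such a half-strip has a vertical crosscut
with short image, uniformly in `n`. Its end points lie in the complement, where uniform local
connectedness joins them by a small continuum; crosscut and continuum together separate, by an
argument with continuous logarithms, the image of the half-strip beyond the crosscut from the
centre. Hence the maps oscillate uniformly little near the circle, and they are equicontinuous.

By Arzelà–Ascoli a subsequence of the extensions converges uniformly. Hurwitz's theorem shows that
the limit is injective and that every point of its image has a neighbourhood that is eventually
covered, so upper Kuratowski limits of continua in the complements are continua in the complement
of the limit image.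
-/

open Filter Topology MeasureTheory
open scoped Real

/-! ### Continuous logarithms and planar separation -/

/-- `f` has a continuous logarithm on `S`. By Eilenberg's criterion, the existence of such
logarithms for quotients `(z - w) / (z - p)` on a closed set of the plane detects whether that set
separates `w` from `p`. -/
def HasContinuousLogOn {X : Type*} [TopologicalSpace X] (f : X → ℂ) (S : Set X) : Prop :=
  ∃ g : X → ℂ, ContinuousOn g S ∧ ∀ x ∈ S, exp (g x) = f x

namespace HasContinuousLogOn

variable {X : Type*} [TopologicalSpace X] {f f₁ f₂ : X → ℂ} {S T : Set X}

theorem ne_zero (hf : HasContinuousLogOn f S) {x : X} (hx : x ∈ S) : f x ≠ 0 := by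
  obtain ⟨g, -, hg⟩ := hf
  exact hg x hx ▸ exp_ne_zero _

theorem congr (hf : HasContinuousLogOn f₁ S) (h : EqOn f₁ f₂ S) : HasContinuousLogOn f₂ S := by
  obtain ⟨g, hgc, hg⟩ := hf
  exact ⟨g, hgc, fun x hx => (hg x hx).trans (h hx)⟩

theorem mono (hf : HasContinuousLogOn f T) (h : S ⊆ T) : HasContinuousLogOn f S := by
  obtain ⟨g, hgc, hg⟩ := hf
  exact ⟨g, hgc.mono h, fun x hx => hg x (h hx)⟩

theorem mul (h₁ : HasContinuousLogOn f₁ S) (h₂ : HasContinuousLogOn f₂ S) :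
    HasContinuousLogOn (fun x => f₁ x * f₂ x) S := by
  obtain ⟨g₁, hgc₁, hg₁⟩ := h₁
  obtain ⟨g₂, hgc₂, hg₂⟩ := h₂
  exact ⟨fun x => g₁ x + g₂ x, hgc₁.add hgc₂, fun x hx => by rw [exp_add, hg₁ x hx, hg₂ x hx]⟩

theorem inv (hf : HasContinuousLogOn f S) : HasContinuousLogOn (fun x => (f x)⁻¹) S := by
  obtain ⟨g, hgc, hg⟩ := hf
  exact ⟨fun x => -g x, hgc.neg, fun x hx => by rw [exp_neg, hg x hx]⟩

theorem of_mapsTo_slitPlane (hf : ContinuousOn f S) (h : MapsTo f S slitPlane) :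
    HasContinuousLogOn f S :=
  ⟨fun x => log (f x), hf.clog h, fun _ hx => exp_log (slitPlane_ne_zero (h hx))⟩

theorem of_isSimplyConnected [LocallyPathConnectedSpace X] (hS : IsSimplyConnected S)
    (hSo : IsOpen S) (hf : ContinuousOn f S) (hf₀ : ∀ x ∈ S, f x ≠ 0) :
    HasContinuousLogOn f S := by
  obtain ⟨g, hgc, hg⟩ := exists_continuousOn_eqOn_exp_comp hS hSo hf
    (by rintro ⟨x, hx, h⟩; exact hf₀ x hx h)
  exact ⟨g, hgc, hg⟩

end HasContinuousLogOn

theorem sub_eq_sub_of_exp_eq_exp {X : Type*} [TopologicalSpace X] {S : Set X}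
    (hS : IsPreconnected S) {g₁ g₂ : X → ℂ} (h₁ : ContinuousOn g₁ S) (h₂ : ContinuousOn g₂ S)
    (h : ∀ x ∈ S, exp (g₁ x) = exp (g₂ x)) {x y : X} (hx : x ∈ S) (hy : y ∈ S) :
    g₁ x - g₂ x = g₁ y - g₂ y := by
  have periods_totallyDisconnected :
      IsTotallyDisconnected (range fun n : ℤ => (n : ℂ) * (2 * π * I)) :=
    (countable_range _).isTotallyDisconnected
  refine periods_totallyDisconnected ((fun x => g₁ x - g₂ x) '' S) ?_
    (hS.image _ (h₁.sub h₂)) (mem_image_of_mem _ hx) (mem_image_of_mem _ hy)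
  rintro _ ⟨z, hz, rfl⟩
  obtain ⟨n, hn⟩ := exp_eq_exp_iff_exists_int.1 (h z hz)
  exact ⟨n, (sub_eq_of_eq_add' hn).symm⟩

theorem HasContinuousLogOn.union {X : Type*} [TopologicalSpace X] {f : X → ℂ} {S T : Set X}
    (hS : HasContinuousLogOn f S) (hT : HasContinuousLogOn f T) (hSc : IsClosed S)
    (hTc : IsClosed T) (hST : IsPreconnected (S ∩ T)) : HasContinuousLogOn f (S ∪ T) := by
  classical
  obtain ⟨g₁, hgc₁, hg₁⟩ := hS
  obtain ⟨g₂, hgc₂, hg₂⟩ := hT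
  have hg : ∀ x ∈ S ∩ T, exp (g₁ x) = exp (g₂ x) := fun x hx => by rw [hg₁ x hx.1, hg₂ x hx.2]
  obtain ⟨κ, hκ, hgκ⟩ : ∃ κ : ℂ, exp κ = 1 ∧ ∀ x ∈ S ∩ T, g₁ x = g₂ x + κ := by
    rcases (S ∩ T).eq_empty_or_nonempty with hempty | ⟨y, hy⟩
    · exact ⟨0, exp_zero, by simp [hempty]⟩
    · refine ⟨g₁ y - g₂ y, by rw [exp_sub, hg y hy, div_self (exp_ne_zero _)], fun x hx => ?_⟩
      rw [← sub_eq_sub_of_exp_eq_exp hST (hgc₁.mono inter_subset_left)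
        (hgc₂.mono inter_subset_right) hg hx hy, add_sub_cancel]
  have hgS : EqOn (S.piecewise g₁ (fun x => g₂ x + κ)) g₁ S := piecewise_eqOn _ _ _
  have hgT : EqOn (S.piecewise g₁ (fun x => g₂ x + κ)) (fun x => g₂ x + κ) T := by
    intro x hxT
    by_cases hxS : x ∈ S
    · rw [hgS hxS, hgκ x ⟨hxS, hxT⟩]
    · exact piecewise_eq_of_notMem _ _ _ hxS
  refine ⟨_, (hgc₁.congr hgS).union_of_isClosed ((hgc₂.add continuousOn_const).congr hgT) hSc hTc,
    ?_⟩
  rintro x (hx | hx)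
  · rw [hgS hx, hg₁ x hx]
  · rw [hgT hx, exp_add, hκ, mul_one, hg₂ x hx]

theorem isSimplyConnected_of_convex {E : Type*} [AddCommGroup E] [Module ℝ E]
    [TopologicalSpace E] [ContinuousAdd E] [ContinuousSMul ℝ E] {s : Set E} (hs : Convex ℝ s)
    (hne : s.Nonempty) : IsSimplyConnected s :=
  have := hs.contractibleSpace hne
  (inferInstance : SimplyConnectedSpace s)

theorem not_hasContinuousLogOn_sphere (w : ℂ) {r : ℝ} (hr : 0 < r) :
    ¬ HasContinuousLogOn (fun z => z - w) (sphere w r) := by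
  rintro ⟨g, hgc, hg⟩
  have circle_mem : ∀ t : ℝ, circleMap w r t ∈ sphere w r :=
    fun t => circleMap_mem_sphere w hr.le t
  have h := sub_eq_sub_of_exp_eq_exp isPreconnected_univ (g₁ := fun t : ℝ => g (circleMap w r t))
    (g₂ := fun t : ℝ => Real.log r + t * I)
    (hgc.comp (continuous_circleMap w r).continuousOn fun t _ => circle_mem t) (by fun_prop)
    (fun t _ => by
      simp only [hg _ (circle_mem t), exp_add, ← ofReal_exp, Real.exp_log hr,
        circleMap_sub_center, circleMap_zero])
    (mem_univ 0) (mem_univ (2 * π))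
  have circle_closed : circleMap w r (2 * π) = circleMap w r 0 := by simp [circleMap]
  simp only [circle_closed, sub_right_inj] at h
  simp at h

theorem not_hasContinuousLogOn_of_frontier_subset {U K : Set ℂ} (hU : Bornology.IsBounded U)
    (hK : IsClosed K) (hUK : frontier U ⊆ K) {w p : ℂ} (hw : w ∈ U) (hp : p ∉ U) :
    ¬ HasContinuousLogOn (fun z => (z - w) / (z - p)) K := by
  classical
  intro hlog
  have hpK : p ∉ K := fun h => hlog.ne_zero h (by simp)
  obtain ⟨g, hgc, hg⟩ := hlog
  obtain ⟨G, hG⟩ := ContinuousMap.exists_restrict_eq hK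
    (⟨K.domRestrict g, hgc.domRestrict⟩ : C(K, ℂ))
  have hGg : ∀ z ∈ K, G z = g z := fun z hz => congrArg (fun φ => φ ⟨z, hz⟩) hG
  -- A zero-free extension of `z - w` from the complement of `U` to the whole plane.
  let T : ℂ → ℂ := U.piecewise (fun z => exp (G z) * (z - p)) (fun z => z - w)
  have hTc : Continuous T := by
    refine Continuous.piecewise (fun z hz => ?_) (by fun_prop) (by fun_prop)
    have hzp : z - p ≠ 0 := sub_ne_zero.2 (ne_of_mem_of_not_mem (hUK hz) hpK)
    rw [hGg z (hUK hz), hg z (hUK hz), div_mul_cancel₀ _ hzp]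
  have hT₀ : ∀ z, T z ≠ 0 := by
    intro z
    by_cases hz : z ∈ U
    · simpa only [T, piecewise_eq_of_mem _ _ _ hz] using
        mul_ne_zero (exp_ne_zero _) (sub_ne_zero.2 (ne_of_mem_of_not_mem hz hp))
    · simpa only [T, piecewise_eq_of_notMem _ _ _ hz] using
        sub_ne_zero.2 (ne_of_mem_of_not_mem hw hz).symm
  have hTlog : HasContinuousLogOn T univ :=
    .of_isSimplyConnected (isSimplyConnected_of_convex convex_univ univ_nonempty) isOpen_univ
      hTc.continuousOn fun z _ => hT₀ z
  obtain ⟨R, hR⟩ := (isBounded_iff_subset_ball w).1 hU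
  have hR₀ : 0 < R := dist_nonneg.trans_lt (hR hw)
  refine not_hasContinuousLogOn_sphere w hR₀ ((hTlog.mono (subset_univ _)).congr fun z hz => ?_)
  exact piecewise_eq_of_notMem _ _ _ fun hzU => (hR hzU).ne hz

theorem hasContinuousLogOn_compl_of_ball_subset {Ω : Set ℂ} {u v : ℂ} {r : ℝ}
    (hr : ball u r ⊆ Ω) (hv : v ∈ ball u r) :
    HasContinuousLogOn (fun z => (z - v) / (z - u)) Ωᶜ := by
  have hne : ∀ z ∈ Ωᶜ, z - u ≠ 0 := fun z hz =>
    sub_ne_zero.2 fun h => hz (h ▸ hr (mem_ball_self (pos_of_mem_ball hv)))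
  have hlog : HasContinuousLogOn (fun z => 1 + (u - v) / (z - u)) Ωᶜ := by
    refine .of_mapsTo_slitPlane (continuousOn_const.add
      (continuousOn_const.div (by fun_prop) hne)) fun z hz => mem_slitPlane_of_norm_lt_one ?_
    have hzr : r ≤ dist z u := not_lt.1 fun h => hz (hr h)
    rw [norm_div, div_lt_one (norm_pos_iff.2 (hne z hz)), ← dist_eq_norm, ← dist_eq_norm]
    exact (mem_ball'.1 hv).trans_le hzr
  refine hlog.congr fun z hz => ?_
  have := hne z hz
  field_simp
  ring

theorem hasContinuousLogOn_compl_of_isPreconnected {Ω : Set ℂ} (ho : IsOpen Ω)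
    (hc : IsPreconnected Ω) {u v : ℂ} (hu : u ∈ Ω) (hv : v ∈ Ω) :
    HasContinuousLogOn (fun z => (z - v) / (z - u)) Ωᶜ := by
  refine hc.induction₂ (fun u v => HasContinuousLogOn (fun z => (z - v) / (z - u)) Ωᶜ)
    (fun u hu => ?_) (fun u v w _ hv _ huv hvw => ?_) (fun u v _ _ huv => ?_) hu hv
  · obtain ⟨r, hr₀, hr⟩ := Metric.isOpen_iff.1 ho u hu
    filter_upwards [mem_nhdsWithin_of_mem_nhds (ball_mem_nhds u hr₀)] with v hv
    exact hasContinuousLogOn_compl_of_ball_subset hr hv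
  · refine (hvw.mul huv).congr fun z hz => ?_
    have : z - v ≠ 0 := sub_ne_zero.2 (ne_of_mem_of_not_mem hv hz).symm
    field_simp
  · exact huv.inv.congr fun z _ => inv_div _ _

theorem hasContinuousLogOn_ball {a u v : ℂ} {ε : ℝ} (hu : u ∉ ball a ε) (hv : v ∉ ball a ε) :
    HasContinuousLogOn (fun z => (z - v) / (z - u)) (ball a ε) := by
  rcases (ball a ε).eq_empty_or_nonempty with hempty | hne
  · exact ⟨0, by simp [hempty], by simp [hempty]⟩
  have hsub : ∀ {q : ℂ}, q ∉ ball a ε → ∀ z ∈ ball a ε, z - q ≠ 0 := fun hq z hz =>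
    sub_ne_zero.2 (ne_of_mem_of_not_mem hz hq)
  exact .of_isSimplyConnected (isSimplyConnected_of_convex (convex_ball a ε) hne) isOpen_ball
    ((by fun_prop : ContinuousOn (fun z => z - v) _).div (by fun_prop) (hsub hu))
    fun z hz => div_ne_zero (hsub hv z hz) (hsub hu z hz)

-- Janiszewski's theorem in disguise: neither `K` nor `Ωᶜ` separates `p` from a point of `U`
-- outside the ball, and `K ∩ Ωᶜ` is connected, so `K ∪ Ωᶜ ⊇ frontier U` cannot do so either.
theorem subset_ball_of_frontier_subset {Ω U K : Set ℂ} {a p : ℂ} {ε : ℝ} (ho : IsOpen Ω)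
    (hc : IsPreconnected Ω) (hUΩ : U ⊆ Ω) (hU : Bornology.IsBounded U) (hK : IsClosed K)
    (hKa : K ⊆ ball a ε) (hKΩ : IsPreconnected (K ∩ Ωᶜ)) (hfr : frontier U ⊆ K ∪ Ωᶜ)
    (hpΩ : p ∈ Ω) (hpU : p ∉ U) (hpa : p ∉ ball a ε) : U ⊆ ball a ε := by
  intro w hw
  by_contra hwa
  have hlogK : HasContinuousLogOn (fun z => (z - w) / (z - p)) K :=
    (hasContinuousLogOn_ball hpa hwa).mono hKa
  have hlogΩ := hasContinuousLogOn_compl_of_isPreconnected ho hc hpΩ (hUΩ hw)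
  exact not_hasContinuousLogOn_of_frontier_subset hU (hK.union ho.isClosed_compl) hfr hw hpU
    (hlogK.union hlogΩ hK ho.isClosed_compl hKΩ)

/-! ### The length–area method -/

theorem lintegral_enorm_deriv_sq {h : ℂ → ℂ} {S : Set ℂ} (hS : MeasurableSet S)
    (hd : ∀ z ∈ S, DifferentiableAt ℂ h z) (hi : InjOn h S) :
    ∫⁻ z in S, ‖deriv h z‖ₑ ^ 2 = volume (h '' S) := by
  let h' : ℂ → ℂ →L[ℝ] ℂ := fun z =>
    (ContinuousLinearMap.toSpanSingleton ℂ (deriv h z)).restrictScalars ℝ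
  have jacobian : ∀ z, ENNReal.ofReal |(h' z).det| = ‖deriv h z‖ₑ ^ 2 := by
    intro z
    have hdet : (h' z).det = Algebra.norm ℝ (deriv h z) := by
      rw [Algebra.norm_apply, ContinuousLinearMap.det]
      congr 1
      ext; simp [h', mul_comm]
    rw [hdet, Algebra.norm_complex_apply, normSq_eq_norm_sq, abs_of_nonneg (sq_nonneg _),
      ENNReal.ofReal_pow (norm_nonneg _), ofReal_norm]
  have hh' : ∀ z ∈ S, HasFDerivWithinAt h (h' z) S z := fun z hz =>
    ((hd z hz).hasDerivAt.hasFDerivAt.restrictScalars ℝ).hasFDerivWithinAt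
  simpa only [jacobian] using lintegral_abs_det_fderiv_eq_addHaar_image volume hS hh' hi

theorem measurable_mk_complex : Measurable fun p : ℝ × ℝ => (⟨p.1, p.2⟩ : ℂ) :=
  measurableEquivRealProd.symm.measurable

theorem measurableSet_reProdIm {s t : Set ℝ} (hs : MeasurableSet s) (ht : MeasurableSet t) :
    MeasurableSet (s ×ℂ t) :=
  (measurable_re hs).inter (measurable_im ht)

theorem setLIntegral_reProdIm {f : ℂ → ENNReal} (hf : Measurable f) (s t : Set ℝ) :
    ∫⁻ z in s ×ℂ t, f z = ∫⁻ x in s, ∫⁻ y in t, f ⟨x, y⟩ := by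
  have hpre : measurableEquivRealProd.symm ⁻¹' (s ×ℂ t) = s ×ˢ t := by
    ext p
    simp [mem_reProdIm]
  rw [← volume_preserving_equiv_real_prod.symm.setLIntegral_comp_preimage_emb
    (MeasurableEquiv.measurableEmbedding _), hpre, Measure.volume_eq_prod,
    setLIntegral_prod (fun p => f (measurableEquivRealProd.symm p))
      (hf.comp measurableEquivRealProd.symm.measurable).aemeasurable]
  rfl

theorem exists_vertical_lintegral_enorm_deriv_sq_le {h : ℂ → ℂ} {s t : Set ℝ}
    (hs : MeasurableSet s) (hs₀ : volume s ≠ 0) (hs_top : volume s ≠ ⊤) (ht : MeasurableSet t)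
    (hd : ∀ z ∈ s ×ℂ t, DifferentiableAt ℂ h z) (hi : InjOn h (s ×ℂ t)) :
    ∃ x ∈ s, ∫⁻ y in t, ‖deriv h ⟨x, y⟩‖ₑ ^ 2 ≤ volume (h '' (s ×ℂ t)) / volume s := by
  have hmeas : Measurable fun z => ‖deriv h z‖ₑ ^ 2 := (measurable_deriv h).enorm.pow_const 2
  have hmeas_inner : Measurable fun x : ℝ => ∫⁻ y in t, ‖deriv h ⟨x, y⟩‖ₑ ^ 2 :=
    (hmeas.comp measurable_mk_complex).lintegral_prod_right'
  obtain ⟨x, hx, hle⟩ := exists_le_setLAverage hs₀ hs_top hmeas_inner.aemeasurable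
  rw [setLAverage_eq, ← setLIntegral_reProdIm hmeas,
    lintegral_enorm_deriv_sq (measurableSet_reProdIm hs ht) hd hi] at hle
  exact ⟨x, hx, hle⟩

theorem sq_lintegral_le_measure_mul_lintegral_sq {α : Type*} [MeasurableSpace α] (μ : Measure α)
    {f : α → ENNReal} (hf : AEMeasurable f μ) :
    (∫⁻ x, f x ∂μ) ^ 2 ≤ μ univ * ∫⁻ x, f x ^ 2 ∂μ := by
  have holder := ENNReal.lintegral_mul_le_Lp_mul_Lq μ Real.HolderConjugate.two_two
    (aemeasurable_const (b := (1 : ENNReal))) hf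
  simp only [Pi.mul_apply, one_mul, ENNReal.rpow_two, one_pow, lintegral_one] at holder
  calc (∫⁻ x, f x ∂μ) ^ 2
      ≤ (μ univ ^ (1 / 2 : ℝ) * (∫⁻ x, f x ^ 2 ∂μ) ^ (1 / 2 : ℝ)) ^ 2 := by gcongr
    _ = μ univ * ∫⁻ x, f x ^ 2 ∂μ := by
      rw [← ENNReal.rpow_two, ← ENNReal.mul_rpow_of_nonneg _ _ (by norm_num), ← ENNReal.rpow_mul]
      norm_num

theorem exists_continuousOn_Icc_of_integrableOn_deriv {E : Type*} [NormedAddCommGroup E]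
    [NormedSpace ℝ E] [CompleteSpace E] {f f' : ℝ → E} {a b : ℝ} (hab : a < b)
    (hf : ∀ t ∈ Ioo a b, HasDerivAt f (f' t) t) (hf' : IntegrableOn f' (Ioo a b)) :
    ∃ γ : ℝ → E, ContinuousOn γ (Icc a b) ∧ EqOn γ f (Ioo a b) ∧
      ∀ x ∈ Icc a b, ∀ y ∈ Icc a b, edist (γ x) (γ y) ≤ ∫⁻ t in Ioo a b, ‖f' t‖ₑ := by
  obtain ⟨c, hc⟩ := exists_between hab
  have hint : ∀ x ∈ Icc a b, ∀ y ∈ Icc a b, IntervalIntegrable f' volume x y :=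
    fun x hx y hy => ((intervalIntegrable_iff_integrableOn_Ioo_of_le hab.le).2 hf').mono_set
      ((uIcc_subset_Icc hx hy).trans Icc_subset_uIcc)
  have hcIcc := Ioo_subset_Icc_self hc
  refine ⟨fun x => f c + ∫ t in c..x, f' t, ?_, fun x hx => ?_, fun x hx y hy => ?_⟩
  · have := intervalIntegral.continuousOn_primitive_interval'
      (hint a (left_mem_Icc.2 hab.le) b (right_mem_Icc.2 hab.le)) (Icc_subset_uIcc hcIcc)
    exact continuousOn_const.add (uIcc_of_le hab.le ▸ this)
  · have hsub : uIcc c x ⊆ Ioo a b := (convex_Ioo a b).ordConnected.uIcc_subset hc hx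
    simp only [intervalIntegral.integral_eq_sub_of_hasDerivAt (fun t ht => hf t (hsub ht))
      (hint c hcIcc x (Ioo_subset_Icc_self hx)), add_sub_cancel]
  · have hsub : uIoc y x ⊆ Ioc a b := uIoc_subset_uIoc_of_uIcc_subset_uIcc
      ((uIcc_subset_Icc hy hx).trans Icc_subset_uIcc) |>.trans (uIoc_of_le hab.le).subset
    rw [edist_add_left, edist_eq_enorm_sub,
      intervalIntegral.integral_interval_sub_left (hint c hcIcc x hx) (hint c hcIcc y hy)]
    calc ‖∫ t in y..x, f' t‖ₑ = ‖∫ t in uIoc y x, f' t‖ₑ := by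
          simp only [← ofReal_norm, intervalIntegral.norm_intervalIntegral_eq]
      _ ≤ ∫⁻ t in uIoc y x, ‖f' t‖ₑ := enorm_integral_le_lintegral_enorm _
      _ ≤ ∫⁻ t in Ioc a b, ‖f' t‖ₑ := lintegral_mono_set hsub
      _ = ∫⁻ t in Ioo a b, ‖f' t‖ₑ := setLIntegral_congr Ioo_ae_eq_Ioc.symm

theorem hasDerivAt_comp_vertical {h : ℂ → ℂ} {x y : ℝ} (hh : DifferentiableAt ℂ h ⟨x, y⟩) :
    HasDerivAt (fun t : ℝ => h ⟨x, t⟩) (deriv h ⟨x, y⟩ * I) y := by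
  have hline : HasDerivAt (fun t : ℝ => (⟨x, t⟩ : ℂ)) I y := by
    simpa [mk_eq_add_mul_I] using ((hasDerivAt_id y).ofReal_comp.mul_const I).const_add (x : ℂ)
  exact hh.hasDerivAt.comp_of_eq y hline rfl

theorem exists_vertical_crosscut {h : ℂ → ℂ} {s : Set ℝ} {a b : ℝ} (hab : a < b)
    (hs : MeasurableSet s) (hs₀ : volume s ≠ 0) (hs_top : volume s ≠ ⊤)
    (hd : ∀ z ∈ s ×ℂ Ioo a b, DifferentiableAt ℂ h z) (hi : InjOn h (s ×ℂ Ioo a b))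
    (harea : volume (h '' (s ×ℂ Ioo a b)) ≠ ⊤) :
    ∃ x ∈ s, ∃ γ : ℝ → ℂ, ContinuousOn γ (Icc a b) ∧ EqOn γ (fun y => h ⟨x, y⟩) (Ioo a b) ∧
      ∀ y ∈ Icc a b, ∀ y' ∈ Icc a b, edist (γ y) (γ y') ^ 2 ≤
        ENNReal.ofReal (b - a) * (volume (h '' (s ×ℂ Ioo a b)) / volume s) := by
  obtain ⟨x, hx, henergy⟩ := exists_vertical_lintegral_enorm_deriv_sq_le hs hs₀ hs_top
    measurableSet_Ioo hd hi
  have hmeas : Measurable fun y : ℝ => deriv h ⟨x, y⟩ :=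
    (measurable_deriv h).comp (measurable_mk_complex.comp measurable_prodMk_left)
  have hlength : (∫⁻ y in Ioo a b, ‖deriv h ⟨x, y⟩ * I‖ₑ) ^ 2 ≤
      ENNReal.ofReal (b - a) * (volume (h '' (s ×ℂ Ioo a b)) / volume s) := by
    have hI : ‖I‖ₑ = 1 := by simp [← ofReal_norm]
    simp only [enorm_mul, hI, mul_one]
    refine (sq_lintegral_le_measure_mul_lintegral_sq _ hmeas.enorm.aemeasurable).trans ?_
    rw [Measure.restrict_apply_univ, Real.volume_Ioo]
    gcongr
  have hint : IntegrableOn (fun y => deriv h ⟨x, y⟩ * I) (Ioo a b) := by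
    refine ⟨(hmeas.mul_const I).aestronglyMeasurable, ?_⟩
    refine (ENNReal.pow_lt_top_iff.1 (hlength.trans_lt ?_)).resolve_right two_ne_zero
    exact ENNReal.mul_lt_top ENNReal.ofReal_lt_top (ENNReal.div_lt_top harea hs₀)
  obtain ⟨γ, hγc, hγ, hγlength⟩ := exists_continuousOn_Icc_of_integrableOn_deriv hab
    (fun y hy => hasDerivAt_comp_vertical (hd _ ⟨hx, hy⟩)) hint
  exact ⟨x, hx, γ, hγc, hγ, fun y hy y' hy' =>
    (pow_le_pow_left' (hγlength y hy y' hy') 2).trans hlength⟩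

/-! ### Conformal maps of a strip and of the disc -/

theorem isOpen_image_of_injOn {f : ℂ → ℂ} {W : Set ℂ} (hW : IsOpen W) (hc : IsPreconnected W)
    (hne : W.Nontrivial) (hd : DifferentiableOn ℂ f W) (hi : InjOn f W) {s : Set ℂ}
    (hsW : s ⊆ W) (hs : IsOpen s) : IsOpen (f '' s) := by
  rcases (hd.analyticOnNhd hW).is_constant_or_isOpen hc with ⟨c, hconst⟩ | hopen
  · obtain ⟨x, hx, y, hy, hxy⟩ := hne
    exact absurd (hi hx hy ((hconst x hx).trans (hconst y hy).symm)) hxy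
  · exact hopen s hsW hs

theorem notMem_image_of_tendsto {X Y ι : Type*} [TopologicalSpace X] [T2Space X]
    [TopologicalSpace Y] {f : X → Y} {W : Set X} (hW : IsOpen W)
    (hf : ∀ s ⊆ W, IsOpen s → IsOpen (f '' s)) (hi : InjOn f W) {l : Filter ι} [l.NeBot]
    {u : ι → X} {x : X} {b : Y} (hu : Tendsto u l (𝓝 x)) (huW : ∀ᶠ i in l, u i ∈ W)
    (hx : x ∉ W) (hfu : Tendsto (fun i => f (u i)) l (𝓝 b)) : b ∉ f '' W := by
  rintro ⟨y, hy, rfl⟩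
  obtain ⟨A, B, hA, hB, hxA, hyB, hAB⟩ := t2_separation (ne_of_mem_of_not_mem hy hx).symm
  have hnhds : f '' (B ∩ W) ∈ 𝓝 (f y) :=
    (hf _ inter_subset_right (hB.inter hW)).mem_nhds (mem_image_of_mem f ⟨hyB, hy⟩)
  obtain ⟨i, hiA, ⟨z, ⟨hzB, hzW⟩, hz⟩, hiW⟩ :=
    ((hu.eventually_mem (hA.mem_nhds hxA)).and ((hfu.eventually_mem hnhds).and huW)).exists
  exact disjoint_left.1 hAB hiA (hi hzW hiW hz ▸ hzB)

/-- The strip `|Im z| < π / 2`, the image of the right half-plane under the logarithm. -/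
def strip : Set ℂ := im ⁻¹' Ioo (-(π / 2)) (π / 2)

theorem isOpen_strip : IsOpen strip := isOpen_Ioo.preimage continuous_im

theorem isPreconnected_strip : IsPreconnected strip :=
  ((convex_Ioo _ _).linear_preimage imLm).isPreconnected

theorem ofReal_mem_strip (x : ℝ) : (x : ℂ) ∈ strip := by
  simp [strip, Real.pi_pos]

theorem nontrivial_strip : strip.Nontrivial :=
  ⟨(0 : ℝ), ofReal_mem_strip 0, (1 : ℝ), ofReal_mem_strip 1, by simp⟩

section Strip

variable {h : ℂ → ℂ} {γ : ℝ → ℂ} {s : ℝ}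

theorem crosscut_endpoint_notMem_image (hd : DifferentiableOn ℂ h strip) (hi : InjOn h strip)
    (hγc : ContinuousOn γ (Icc (-(π / 2)) (π / 2)))
    (hγ : EqOn γ (fun y => h ⟨s, y⟩) (Ioo (-(π / 2)) (π / 2)))
    {y : ℝ} (hy : y ∈ Icc (-(π / 2)) (π / 2))
    (hy' : y ∉ Ioo (-(π / 2)) (π / 2)) : γ y ∉ h '' strip := by
  have hne : -(π / 2) ≠ π / 2 := by linarith [Real.pi_pos]
  have hclosure : y ∈ closure (Ioo (-(π / 2)) (π / 2)) := by rwa [closure_Ioo hne]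
  have : (𝓝[Ioo (-(π / 2)) (π / 2)] y).NeBot :=
    mem_closure_iff_nhdsWithin_neBot.1 hclosure
  have hline : Continuous fun t : ℝ => (⟨s, t⟩ : ℂ) := by
    simp only [mk_eq_add_mul_I]
    fun_prop
  refine notMem_image_of_tendsto isOpen_strip
    (fun _ => isOpen_image_of_injOn isOpen_strip isPreconnected_strip nontrivial_strip hd hi) hi
    (l := 𝓝[Ioo (-(π / 2)) (π / 2)] y) (u := fun t => ⟨s, t⟩) (x := ⟨s, y⟩)
    (hline.continuousAt.mono_left nhdsWithin_le_nhds) self_mem_nhdsWithin hy' ?_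
  exact ((hγc y hy).mono Ioo_subset_Icc_self).congr' (hγ.eventuallyEq_nhdsWithin)

theorem frontier_image_re_lt_subset (hd : DifferentiableOn ℂ h strip) (hi : InjOn h strip) (s : ℝ) :
    frontier (h '' (strip ∩ {z | z.re < s})) ⊆
      (fun y : ℝ => h ⟨s, y⟩) '' Ioo (-(π / 2)) (π / 2) ∪ (h '' strip)ᶜ := by
  have image_open : ∀ {t : Set ℂ}, IsOpen t → IsOpen (h '' (strip ∩ t)) := fun ht =>
    isOpen_image_of_injOn isOpen_strip isPreconnected_strip nontrivial_strip hd hi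
      inter_subset_left (isOpen_strip.inter ht)
  refine fun w hw => or_iff_not_imp_right.2 fun hwΩ => ?_
  obtain ⟨z, hz, rfl⟩ := not_not.1 hwΩ
  rcases lt_trichotomy z.re s with hlt | heq | hgt
  · have hU := image_open (isOpen_lt continuous_re (continuous_const (y := s)))
    rw [hU.frontier_eq] at hw
    exact absurd ⟨z, ⟨hz, hlt⟩, rfl⟩ hw.2
  · exact ⟨z.im, hz, by rw [← heq]⟩
  · have hV := image_open (isOpen_lt (continuous_const (y := s)) continuous_re)
    obtain ⟨_, ⟨z₁, ⟨hz₁, hz₁s⟩, rfl⟩, z₂, ⟨hz₂, hz₂s⟩, heq⟩ :=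
      mem_closure_iff.1 (frontier_subset_closure hw) _ hV (mem_image_of_mem h ⟨hz, hgt⟩)
    rw [hi hz₂ hz₁ heq] at hz₂s
    exact absurd (mem_ofPred.1 hz₁s) (lt_asymm hz₂s)

theorem image_re_lt_subset_ball_of_crosscut (hd : DifferentiableOn ℂ h strip) (hi : InjOn h strip)
    (hbdd : Bornology.IsBounded (h '' strip)) (hs : s < 0)
    (hγc : ContinuousOn γ (Icc (-(π / 2)) (π / 2)))
    (hγ : EqOn γ (fun y => h ⟨s, y⟩) (Ioo (-(π / 2)) (π / 2)))
    {ε ε' : ℝ} (hε' : ε' < ε)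
    (hγε : ∀ y ∈ Icc (-(π / 2)) (π / 2), dist (γ y) (γ (-(π / 2))) < ε)
    (hjoin : JoinedByContinuumIn (h '' strip)ᶜ (γ (-(π / 2))) (γ (π / 2)) ε')
    (hball : ball (h 0) ε ⊆ h '' strip) :
    h '' (strip ∩ {z | z.re < s}) ⊆ ball (γ (-(π / 2))) ε := by
  obtain ⟨B, hBΩ, hBcpt, hBconn, hleft, hright, hBdiam⟩ := hjoin
  have h0 : (0 : ℂ) ∈ strip := ofReal_mem_strip 0
  have hΩ : IsOpen (h '' strip) := isOpen_image_of_injOn isOpen_strip isPreconnected_strip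
    nontrivial_strip hd hi Subset.rfl isOpen_strip
  have hBball : B ⊆ ball (γ (-(π / 2))) ε := fun b hb =>
    ((dist_le_diam_of_mem hBcpt.isBounded hb hleft).trans hBdiam).trans_lt hε'
  have hKΩ : (γ '' Icc (-(π / 2)) (π / 2) ∪ B) ∩ (h '' strip)ᶜ = B := by
    refine Subset.antisymm ?_ fun b hb => ⟨Or.inr hb, hBΩ hb⟩
    rintro _ ⟨⟨y, hy, rfl⟩ | hb, hyΩ⟩
    · rcases eq_endpoints_or_mem_Ioo_of_mem_Icc hy with rfl | rfl | hy
      · exact hleft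
      · exact hright
      · exact absurd ⟨⟨s, y⟩, hy, (hγ hy).symm⟩ hyΩ
    · exact hb
  refine subset_ball_of_frontier_subset (K := γ '' Icc (-(π / 2)) (π / 2) ∪ B)
    (p := h 0) hΩ (isPreconnected_strip.image h hd.continuousOn) (image_mono inter_subset_left)
    (hbdd.subset (image_mono inter_subset_left))
    ((isCompact_Icc.image_of_continuousOn hγc).isClosed.union hBcpt.isClosed)
    (union_subset (image_subset_iff.2 hγε) hBball)
    (by simpa only [hKΩ] using hBconn.isPreconnected) ?_
    (mem_image_of_mem h h0) ?_ fun hmem => hBΩ hleft (hball (mem_ball_comm.1 hmem))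
  · refine (frontier_image_re_lt_subset hd hi s).trans (union_subset_union_left _ ?_)
    rw [← hγ.image_eq]
    exact (image_mono Ioo_subset_Icc_self).trans subset_union_left
  · rintro ⟨z, ⟨hz, hzs⟩, heq⟩
    rw [hi hz h0 heq] at hzs
    exact hs.not_gt hzs

theorem exists_image_re_lt_subset_ball (hd : DifferentiableOn ℂ h strip) (hi : InjOn h strip)
    (hbdd : Bornology.IsBounded (h '' strip)) {δ ε ε' T : ℝ} (hT : 0 < T) (hδε : δ ≤ ε)
    (hε' : ε' < ε) (hball : ball (h 0) ε ⊆ h '' strip)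
    (hjoin : ∀ b ∈ (h '' strip)ᶜ, ∀ c ∈ (h '' strip)ᶜ, dist b c < δ →
      JoinedByContinuumIn (h '' strip)ᶜ b c ε')
    (harea : ENNReal.ofReal π * (volume (h '' strip) / ENNReal.ofReal T) <
      ENNReal.ofReal δ ^ 2) :
    ∃ a, h '' (strip ∩ {z | z.re < -(2 * T)}) ⊆ ball a ε := by
  have hrect : Icc (-(2 * T)) (-T) ×ℂ Ioo (-(π / 2)) (π / 2) ⊆ strip :=
    inter_subset_right
  have hvol : volume (Icc (-(2 * T)) (-T)) = ENNReal.ofReal T := by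
    rw [Real.volume_Icc]
    congr 1
    ring
  have hpi : π / 2 - -(π / 2) = π := by ring
  obtain ⟨s, hs, γ, hγc, hγ, hlength⟩ := exists_vertical_crosscut (by linarith [Real.pi_pos])
    measurableSet_Icc (hvol ▸ (ENNReal.ofReal_pos.2 hT).ne') (hvol ▸ ENNReal.ofReal_ne_top)
    (fun z hz => hd.differentiableAt (isOpen_strip.mem_nhds (hrect hz))) (hi.mono hrect)
    (hbdd.subset (image_mono hrect)).measure_lt_top.ne
  have hγδ : ∀ y ∈ Icc (-(π / 2)) (π / 2), ∀ y' ∈ Icc (-(π / 2)) (π / 2),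
      dist (γ y) (γ y') < δ := by
    intro y hy y' hy'
    refine (ENNReal.ofReal_lt_ofReal_iff_of_nonneg dist_nonneg).1 ?_
    rw [← edist_dist]
    refine lt_of_pow_lt_pow_left' 2 ((hlength y hy y' hy').trans_lt (lt_of_le_of_lt ?_ harea))
    rw [hvol, hpi]
    gcongr
  have hleft : -(π / 2) ∈ Icc (-(π / 2)) (π / 2) :=
    left_mem_Icc.2 (by linarith [Real.pi_pos])
  have hright : π / 2 ∈ Icc (-(π / 2)) (π / 2) :=
    right_mem_Icc.2 (by linarith [Real.pi_pos])
  have hsub := image_re_lt_subset_ball_of_crosscut hd hi hbdd (by linarith [hs.2]) hγc hγ hε'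
    (fun y hy => (hγδ y hy _ hleft).trans_le hδε)
    (hjoin _ (crosscut_endpoint_notMem_image hd hi hγc hγ hleft (by simp)) _
      (crosscut_endpoint_notMem_image hd hi hγc hγ hright (by simp)) (hγδ _ hleft _ hright)) hball
  exact ⟨_, (image_mono (inter_subset_inter_right _ fun z hz => hz.trans_le hs.1)).trans hsub⟩

end Strip

theorem norm_one_add_sq_sub_norm_one_sub_sq (ζ : ℂ) : ‖1 + ζ‖ ^ 2 - ‖1 - ζ‖ ^ 2 = 4 * ζ.re := by
  simp only [← normSq_eq_norm_sq, normSq_apply, add_re, sub_re, add_im, sub_im, one_re, one_im]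
  ring

theorem norm_one_sub_lt_norm_one_add_iff {ζ : ℂ} : ‖1 - ζ‖ < ‖1 + ζ‖ ↔ 0 < ζ.re := by
  rw [← pow_lt_pow_iff_left₀ (norm_nonneg _) (norm_nonneg _) two_ne_zero]
  constructor <;> intro <;> linarith [norm_one_add_sq_sub_norm_one_sub_sq ζ]

theorem one_add_ne_zero_of_re_pos {ζ : ℂ} (hζ : 0 < ζ.re) : 1 + ζ ≠ 0 :=
  norm_pos_iff.1 ((norm_nonneg _).trans_lt (norm_one_sub_lt_norm_one_add_iff.2 hζ))

theorem exp_re_pos_of_mem_strip {z : ℂ} (hz : z ∈ strip) : 0 < (exp z).re := by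
  rw [exp_re]
  exact mul_pos (Real.exp_pos _) (Real.cos_pos_of_mem_Ioo hz)

/-- The conformal map of the strip onto the unit disc that sends `0` to `0` and the end `-∞` of
the strip to the point `z₀` of the unit circle. -/
noncomputable def stripMap (z₀ z : ℂ) : ℂ := z₀ * ((1 - exp z) / (1 + exp z))

theorem stripMap_zero (z₀ : ℂ) : stripMap z₀ 0 = 0 := by simp [stripMap]

section StripMap

variable {z₀ : ℂ}

theorem differentiableOn_stripMap (z₀ : ℂ) : DifferentiableOn ℂ (stripMap z₀) strip := by
  intro z hz
  have := one_add_ne_zero_of_re_pos (exp_re_pos_of_mem_strip hz)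
  exact (((differentiableAt_const 1).sub differentiableAt_exp).div
    ((differentiableAt_const 1).add differentiableAt_exp) this).const_mul z₀
    |>.differentiableWithinAt

theorem mapsTo_stripMap (hz₀ : ‖z₀‖ = 1) : MapsTo (stripMap z₀) strip (ball 0 1) := by
  intro z hz
  have hre := exp_re_pos_of_mem_strip hz
  rw [mem_ball_zero_iff, stripMap, norm_mul, hz₀, one_mul, norm_div,
    div_lt_one (norm_pos_iff.2 (one_add_ne_zero_of_re_pos hre))]
  exact norm_one_sub_lt_norm_one_add_iff.2 hre

theorem injOn_stripMap (hz₀ : z₀ ≠ 0) : InjOn (stripMap z₀) strip := by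
  intro z hz w hw h
  have hcayley := mul_left_cancel₀ hz₀ h
  rw [div_eq_div_iff (one_add_ne_zero_of_re_pos (exp_re_pos_of_mem_strip hz))
    (one_add_ne_zero_of_re_pos (exp_re_pos_of_mem_strip hw))] at hcayley
  have hexp : exp z = exp w := by linear_combination -hcayley / 2
  have := Real.pi_pos
  exact exp_inj_of_neg_pi_lt_of_le_pi (by linarith [hz.1]) (by linarith [hz.2])
    (by linarith [hw.1]) (by linarith [hw.2]) hexp

theorem exists_stripMap_eq (hz₀ : ‖z₀‖ = 1) {x : ℂ} (hx : x ∈ ball 0 1) :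
    ∃ z ∈ strip, stripMap z₀ z = x ∧ z.re = Real.log (‖z₀ - x‖ / ‖z₀ + x‖) := by
  rw [mem_ball_zero_iff] at hx
  have hadd : z₀ + x ≠ 0 := fun h => hx.ne (by rw [← hz₀, eq_neg_of_add_eq_zero_left h, norm_neg])
  have hsub : z₀ - x ≠ 0 := fun h => hx.ne (by rw [← hz₀, sub_eq_zero.1 h])
  have hone_add : 1 + (z₀ - x) / (z₀ + x) = 2 * z₀ / (z₀ + x) := by field_simp; ring
  have hone_sub : 1 - (z₀ - x) / (z₀ + x) = 2 * x / (z₀ + x) := by field_simp; ring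
  have hre : 0 < ((z₀ - x) / (z₀ + x)).re := by
    rw [← norm_one_sub_lt_norm_one_add_iff, hone_add, hone_sub]
    simp only [norm_div, norm_mul, hz₀]
    have := norm_pos_iff.2 hadd
    gcongr
    simp
  refine ⟨log ((z₀ - x) / (z₀ + x)), ?_, ?_, by rw [log_re, norm_div]⟩
  · exact abs_lt.1 (log_im _ ▸ abs_arg_lt_pi_div_two_iff.2 (Or.inl hre))
  · have : z₀ ≠ 0 := norm_ne_zero_iff.1 (hz₀ ▸ one_ne_zero)
    rw [stripMap, exp_log (div_ne_zero hsub hadd), hone_add, hone_sub]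
    field_simp

theorem image_stripMap (hz₀ : ‖z₀‖ = 1) : stripMap z₀ '' strip = ball 0 1 :=
  (mapsTo_stripMap hz₀).image_subset.antisymm fun _ hx =>
    let ⟨z, hz, hzx, _⟩ := exists_stripMap_eq hz₀ hx
    ⟨z, hz, hzx⟩

theorem exists_stripMap_eq_of_dist_lt_exp (hz₀ : ‖z₀‖ = 1) {x : ℂ} (hx : x ∈ ball 0 1) {t : ℝ}
    (ht : t ≤ 0) (hxz₀ : dist x z₀ < Real.exp t) : ∃ z ∈ strip, stripMap z₀ z = x ∧ z.re < t := by
  obtain ⟨z, hz, hzx, hre⟩ := exists_stripMap_eq hz₀ hx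
  refine ⟨z, hz, hzx, ?_⟩
  rw [dist_comm, dist_eq_norm] at hxz₀
  have hsub : 0 < ‖z₀ - x‖ := norm_pos_iff.2 (sub_ne_zero.2 fun h => by simp [← h, hz₀] at hx)
  have hadd : 1 ≤ ‖z₀ + x‖ := by
    have htwo : ‖(z₀ + x) + (z₀ - x)‖ = 2 := by
      rw [show (z₀ + x) + (z₀ - x) = 2 * z₀ by ring, norm_mul, hz₀]
      simp
    linarith [norm_add_le (z₀ + x) (z₀ - x), Real.exp_le_one_iff.2 ht]
  rw [hre, Real.log_lt_iff_lt_exp (by positivity)]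
  exact (div_le_self hsub.le hadd).trans_lt hxz₀

end StripMap

section Disc

variable {f : ℂ → ℂ} {ε ε' δ T : ℝ}

theorem exists_dist_lt_of_dist_unit_lt_exp (hd : DifferentiableOn ℂ f (ball 0 1))
    (hi : InjOn f (ball 0 1)) (hbdd : Bornology.IsBounded (f '' ball 0 1)) (hT : 0 < T)
    (hδε : δ ≤ ε) (hε' : ε' < ε) (hball : ball (f 0) ε ⊆ f '' ball 0 1)
    (hjoin : ∀ b ∈ (f '' ball 0 1)ᶜ, ∀ c ∈ (f '' ball 0 1)ᶜ, dist b c < δ →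
      JoinedByContinuumIn (f '' ball 0 1)ᶜ b c ε')
    (harea : ENNReal.ofReal π * (volume (f '' ball 0 1) / ENNReal.ofReal T) <
      ENNReal.ofReal δ ^ 2) {z₀ : ℂ} (hz₀ : ‖z₀‖ = 1) :
    ∃ a, ∀ x ∈ ball (0 : ℂ) 1, dist x z₀ < Real.exp (-(2 * T)) → dist (f x) a < ε := by
  have himage : f '' ball 0 1 = (fun z => f (stripMap z₀ z)) '' strip := by
    rw [← image_stripMap hz₀, image_image]
  have hmaps := mapsTo_stripMap hz₀
  rw [himage] at hball hjoin harea hbdd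
  obtain ⟨a, ha⟩ := exists_image_re_lt_subset_ball (h := fun z => f (stripMap z₀ z))
    (hd.comp (differentiableOn_stripMap z₀) hmaps)
    (hi.comp (injOn_stripMap (norm_ne_zero_iff.1 (hz₀ ▸ one_ne_zero))) hmaps) hbdd hT hδε hε'
    (by rwa [stripMap_zero]) hjoin harea
  refine ⟨a, fun x hx hxz₀ => ?_⟩
  obtain ⟨z, hz, rfl, hre⟩ := exists_stripMap_eq_of_dist_lt_exp hz₀ hx (by linarith) hxz₀
  exact ha ⟨z, ⟨hz, hre⟩, rfl⟩

theorem dist_div_norm_self {x : ℂ} (hx : x ≠ 0) (hx1 : ‖x‖ ≤ 1) :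
    dist x (x / ‖x‖) = 1 - ‖x‖ := by
  have hx₀ : (‖x‖ : ℂ) ≠ 0 := ofReal_ne_zero.2 (norm_ne_zero_iff.2 hx)
  have hsub : x / ‖x‖ - x = ((1 - ‖x‖ : ℝ) : ℂ) * (x / ‖x‖) := by
    push_cast
    field_simp
  rw [dist_comm, dist_eq_norm, hsub, norm_mul, norm_div, norm_real, norm_real, norm_norm,
    div_self (norm_ne_zero_iff.2 hx), mul_one, Real.norm_of_nonneg (sub_nonneg.2 hx1)]

-- Near the circle the oscillation hypothesis applies; away from it the Schwarz lemma does.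
theorem dist_lt_of_oscillation_near_circle {M ρ : ℝ} (hd : DifferentiableOn ℂ f (ball 0 1))
    (hM : MapsTo f (ball 0 1) (ball 0 M)) (hρ : 0 < ρ) (hρ1 : ρ ≤ 1)
    (hosc : ∀ z₀ : ℂ, ‖z₀‖ = 1 →
      ∃ a, ∀ x ∈ ball (0 : ℂ) 1, dist x z₀ < ρ → dist (f x) a < ε / 2)
    {x y : ℂ} (hx : x ∈ ball 0 1) (hy : y ∈ ball 0 1) (hxy : dist x y < ρ / 2)
    (hxyε : dist x y < ε * ρ / (4 * M)) : dist (f x) (f y) < ε := by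
  have hx1 : ‖x‖ < 1 := mem_ball_zero_iff.1 hx
  by_cases hnear : 1 - ρ / 2 < ‖x‖
  · have hx₀ : x ≠ 0 := norm_pos_iff.1 (by linarith)
    have hdist := dist_div_norm_self hx₀ hx1.le
    obtain ⟨a, ha⟩ := hosc (x / ‖x‖) (by
      rw [norm_div, norm_real, norm_norm, div_self (norm_ne_zero_iff.2 hx₀)])
    have hxa := ha x hx (by linarith)
    have hya := ha y hy (by linarith [dist_triangle_left y (x / ‖x‖) x])
    linarith [dist_triangle_right (f x) (f y) a]
  · have hsub : ball x (ρ / 2) ⊆ ball 0 1 := ball_subset_ball' (by rw [dist_zero_right]; linarith)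
    have hM₀ : 0 < M := pos_of_mem_ball (hM hx)
    have hmaps : MapsTo f (ball x (ρ / 2)) (closedBall (f x) (2 * M)) := fun w hw => by
      have hw0 := mem_ball.1 (hM (hsub hw))
      have hx0 := mem_ball.1 (hM hx)
      exact mem_closedBall.2 (by linarith [dist_triangle_right (f w) (f x) 0])
    calc dist (f x) (f y) ≤ 2 * M / (ρ / 2) * dist x y := by
          simpa only [dist_comm] using
            dist_le_div_mul_dist_of_mapsTo_ball (hd.mono hsub) hmaps (mem_ball'.2 hxy)
      _ < 2 * M / (ρ / 2) * (ε * ρ / (4 * M)) := by gcongr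
      _ = ε := by field_simp; ring

end Disc

theorem equicontinuousOnSet_ball {r M : ℝ} (hr : 0 < r) {Φ : ℕ → ℂ → ℂ}
    (hd : ∀ n, DifferentiableOn ℂ (Φ n) (ball 0 1)) (hi : ∀ n, InjOn (Φ n) (ball 0 1))
    (hM : ∀ n, MapsTo (Φ n) (ball 0 1) (ball 0 M))
    (hball : ∀ n, ball (Φ n 0) r ⊆ Φ n '' ball 0 1)
    (hulc : UnifLocallyConnectedSeq fun n => (Φ n '' ball 0 1)ᶜ) :
    EquicontinuousOnSet Φ (ball 0 1) := by
  intro ε hε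
  obtain ⟨ε₁, hε₁, hε₁ε, hε₁r⟩ : ∃ ε₁ > 0, ε₁ ≤ ε / 2 ∧ ε₁ ≤ r :=
    ⟨min (ε / 2) r, lt_min (half_pos hε) hr, min_le_left _ _, min_le_right _ _⟩
  obtain ⟨δ, hδ, hjoin⟩ := hulc (ε₁ / 2) (half_pos hε₁)
  obtain ⟨T, hT, harea⟩ : ∃ T : ℝ, 0 < T ∧
      ENNReal.ofReal π * (volume (ball (0 : ℂ) M) / ENNReal.ofReal T) <
        ENNReal.ofReal (min δ ε₁) ^ 2 := by
    obtain ⟨N, hN, hlt⟩ := ENNReal.exists_nat_pos_inv_mul_lt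
      (a := ENNReal.ofReal π * volume (ball (0 : ℂ) M))
      (ENNReal.mul_lt_top ENNReal.ofReal_lt_top measure_ball_lt_top).ne
      (ENNReal.pow_pos (ENNReal.ofReal_pos.2 (lt_min hδ hε₁)) 2).ne'
    refine ⟨N, Nat.cast_pos.2 hN, ?_⟩
    rwa [ENNReal.ofReal_natCast, ← mul_div_assoc, ENNReal.div_eq_inv_mul]
  have hosc : ∀ n, ∀ z₀ : ℂ, ‖z₀‖ = 1 → ∃ a, ∀ x ∈ ball (0 : ℂ) 1,
      dist x z₀ < Real.exp (-(2 * T)) → dist (Φ n x) a < ε / 2 := by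
    intro n z₀ hz₀
    obtain ⟨a, ha⟩ := exists_dist_lt_of_dist_unit_lt_exp (hd n) (hi n)
      (isBounded_ball.subset (hM n).image_subset) hT (min_le_right δ ε₁) (half_lt_self hε₁)
      ((ball_subset_ball hε₁r).trans (hball n))
      (fun b hb c hc hbc => hjoin n b hb c hc (hbc.trans_le (min_le_left _ _)))
      (lt_of_le_of_lt (by gcongr; exact (hM n).image_subset) harea) hz₀
    exact ⟨a, fun x hx hxz₀ => (ha x hx hxz₀).trans_le hε₁ε⟩
  have hM₀ : 0 < M := pos_of_mem_ball (hM 0 (mem_ball_self one_pos))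
  have hρ := Real.exp_pos (-(2 * T))
  refine ⟨min (Real.exp (-(2 * T)) / 2) (ε * Real.exp (-(2 * T)) / (4 * M)),
    lt_min (by positivity) (by positivity), fun x hx y hy hxy n => ?_⟩
  exact dist_lt_of_oscillation_near_circle (hd n) (hM n) hρ
    (Real.exp_le_one_iff.2 (by linarith)) (hosc n) hx hy (hxy.trans_le (min_le_left _ _))
    (hxy.trans_le (min_le_right _ _))

/-! ### Extension to the closure and compactness -/

theorem tendsto_extendFrom_of_uniformContinuousOn {X Y : Type*} [UniformSpace X]
    [UniformSpace Y] [CompleteSpace Y] {S : Set X} {f : X → Y} (hf : UniformContinuousOn f S)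
    {x : X} (hx : x ∈ closure S) : Tendsto f (𝓝[S] x) (𝓝 (extendFrom S f x)) := by
  have : (𝓝[S] x).NeBot := mem_closure_iff_nhdsWithin_neBot.1 hx
  have hcauchy : Cauchy (map f (𝓝[S] x)) :=
    (cauchy_nhds.mono nhdsWithin_le_nhds).map_of_le hf inf_le_right
  exact tendsto_extendFrom (CompleteSpace.complete hcauchy)

namespace EquicontinuousOnSet

variable {Ψ : ℕ → ℂ → ℂ} {S K : Set ℂ}

theorem uniformContinuousOn (h : EquicontinuousOnSet Ψ S) (n : ℕ) :
    UniformContinuousOn (Ψ n) S := by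
  refine Metric.uniformContinuousOn_iff.2 fun ε hε => ?_
  obtain ⟨δ, hδ, hΨ⟩ := h ε hε
  exact ⟨δ, hδ, fun x hx y hy hxy => hΨ x hx y hy hxy n⟩

theorem tendsto_extendFrom (h : EquicontinuousOnSet Ψ S) (n : ℕ) {x : ℂ} (hx : x ∈ closure S) :
    Tendsto (Ψ n) (𝓝[S] x) (𝓝 (extendFrom S (Ψ n) x)) :=
  tendsto_extendFrom_of_uniformContinuousOn (h.uniformContinuousOn n) hx

theorem closure (h : EquicontinuousOnSet Ψ S) :
    EquicontinuousOnSet (fun n => extendFrom S (Ψ n)) (closure S) := by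
  intro ε hε
  obtain ⟨δ, hδ, hΨ⟩ := h (ε / 2) (half_pos hε)
  refine ⟨δ, hδ, fun x hx y hy hxy n => lt_of_le_of_lt ?_ (half_lt_self hε)⟩
  have : (𝓝[S] x).NeBot := mem_closure_iff_nhdsWithin_neBot.1 hx
  have : (𝓝[S] y).NeBot := mem_closure_iff_nhdsWithin_neBot.1 hy
  have hdist : Tendsto (fun p : ℂ × ℂ => dist p.1 p.2) (𝓝[S] x ×ˢ 𝓝[S] y) (𝓝 (dist x y)) :=
    (tendsto_fst.mono_right nhdsWithin_le_nhds).dist (tendsto_snd.mono_right nhdsWithin_le_nhds)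
  have hmem : ∀ᶠ p : ℂ × ℂ in 𝓝[S] x ×ˢ 𝓝[S] y, p.1 ∈ S ∧ p.2 ∈ S :=
    prod_mem_prod self_mem_nhdsWithin self_mem_nhdsWithin
  refine le_of_tendsto (((h.tendsto_extendFrom n hx).comp tendsto_fst).dist
    ((h.tendsto_extendFrom n hy).comp tendsto_snd)) ?_
  filter_upwards [hdist.eventually_lt_const hxy, hmem] with p hp hpS
  exact (hΨ p.1 hpS.1 p.2 hpS.2 hp n).le

theorem exists_subseq_tendstoUniformlyOn (h : EquicontinuousOnSet Ψ K) (hK : IsCompact K)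
    {T : Set ℂ} (hT : IsCompact T) (hΨT : ∀ n, MapsTo (Ψ n) K T) :
    ∃ k : ℕ → ℕ, StrictMono k ∧ ∃ f, TendstoUniformlyOn (fun m => Ψ (k m)) f atTop K := by
  have : CompactSpace K := isCompact_iff_compactSpace.1 hK
  let F : ℕ → BoundedContinuousFunction K ℂ := fun n => .mkOfCompact
    ⟨K.domRestrict (Ψ n), (h.uniformContinuousOn n).continuousOn.domRestrict⟩
  have hrange : IsCompact (_root_.closure (range F)) := by
    refine BoundedContinuousFunction.arzela_ascoli T hT (range F) ?_ fun x => ?_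
    · rintro _ x ⟨n, rfl⟩
      exact hΨT n x.2
    · refine Metric.equicontinuousAt_iff_right.2 fun ε hε => ?_
      obtain ⟨δ, hδ, hΨ⟩ := h ε hε
      filter_upwards [ball_mem_nhds x hδ] with y hy
      rintro ⟨_, n, rfl⟩
      exact hΨ x x.2 y y.2 (mem_ball'.1 hy) n
  obtain ⟨g, -, k, hk, hg⟩ := hrange.tendsto_subseq fun n => subset_closure (mem_range_self n)
  refine ⟨k, hk, Function.extend Subtype.val g 0, ?_⟩
  rw [tendstoUniformlyOn_iff_tendstoUniformly_comp_coe,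
    Function.extend_comp Subtype.val_injective]
  exact BoundedContinuousFunction.tendsto_iff_tendstoUniformly.1 hg

end EquicontinuousOnSet

/-! ### Hurwitz's theorem -/

theorem isSimplyConnected_image_of_injOn {X Y : Type*} [TopologicalSpace X]
    [TopologicalSpace Y] {f : X → Y} {W : Set X} (hsc : IsSimplyConnected W) (hW : IsOpen W)
    (hc : ContinuousOn f W) (hi : InjOn f W) (hf : ∀ s ⊆ W, IsOpen s → IsOpen (f '' s)) :
    IsSimplyConnected (f '' W) := by
  have hemb : IsOpenEmbedding fun x : W => f x := by
    refine .of_continuous_injective_isOpenMap (continuousOn_iff_continuous_domRestrict.1 hc)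
      hi.injective fun s hs => ?_
    rw [← image_image f Subtype.val]
    exact hf _ (Subtype.coe_image_subset W s) (hW.isOpenMap_subtype_val s hs)
  have := hsc.simplyConnectedSpace
  rw [image_eq_range]
  exact hemb.isEmbedding.toHomeomorph.symm.toHomotopyEquiv.simplyConnectedSpace

theorem eventually_ne_of_ne {f : ℂ → ℂ} {W : Set ℂ} (hW : IsOpen W) (hc : IsPreconnected W)
    (hf : DifferentiableOn ℂ f W) {y z : ℂ} (hy : y ∈ W) (hz : z ∈ W) (hyz : f y ≠ f z)
    {x : ℂ} (hx : x ∈ W) : ∀ᶠ t in 𝓝[≠] x, f t ≠ f x := by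
  have han : AnalyticOnNhd ℂ f W := hf.analyticOnNhd hW
  refine ((han x hx).eventually_eq_or_eventually_ne analyticAt_const).resolve_left fun hconst => ?_
  have heq := han.eqOn_of_preconnected_of_eventuallyEq analyticOnNhd_const hc hx hconst
  exact hyz ((heq hy).trans (heq hz).symm)

theorem exists_sphere_norm_sub_ge {f : ℂ → ℂ} {W : Set ℂ} {x : ℂ} (hW : W ∈ 𝓝 x)
    (hf : ContinuousOn f W) (hne : ∀ᶠ z in 𝓝[≠] x, f z ≠ f x) :
    ∃ ρ > 0, closedBall x ρ ⊆ W ∧ ∃ m > 0, ∀ z ∈ sphere x ρ, m ≤ ‖f z - f x‖ := by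
  obtain ⟨ρ, hρ, hρball⟩ := nhds_basis_closedBall.mem_iff.1
    (inter_mem hW (eventually_nhdsWithin_iff.1 hne))
  have hρW : closedBall x ρ ⊆ W := hρball.trans inter_subset_left
  obtain ⟨q, hq, hmin⟩ := (isCompact_sphere x ρ).exists_isMinOn
    (NormedSpace.sphere_nonempty.2 hρ.le)
    ((hf.mono (sphere_subset_closedBall.trans hρW)).sub continuousOn_const).norm
  have hqx : f q ≠ f x :=
    (hρball (sphere_subset_closedBall hq)).2 (ne_of_mem_sphere hq hρ.ne')
  exact ⟨ρ, hρ, hρW, ‖f q - f x‖, norm_pos_iff.2 (sub_ne_zero.2 hqx), fun z hz => hmin hz⟩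

theorem frequently_ne_of_norm_sub_ge {f : ℂ → ℂ} {W : Set ℂ} (hW : IsOpen W)
    (hf : DifferentiableOn ℂ f W) {x : ℂ} {ρ m : ℝ} (hρ : 0 < ρ) (hρW : closedBall x ρ ⊆ W)
    (hm : 0 < m) (hfm : ∀ z ∈ sphere x ρ, m ≤ ‖f z - f x‖) : ∃ᶠ z in 𝓝 x, f z ≠ f x := by
  intro hconst
  simp only [not_not] at hconst
  have heq : EqOn f (fun _ => f x) (closedBall x ρ) :=
    ((hf.analyticOnNhd hW).mono hρW).eqOn_of_preconnected_of_eventuallyEq analyticOnNhd_const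
      (convex_closedBall x ρ).isPreconnected (mem_closedBall_self hρ.le) hconst
  obtain ⟨q, hq⟩ : (sphere x ρ).Nonempty := NormedSpace.sphere_nonempty.2 hρ.le
  have hmq := hfm q hq
  rw [heq (sphere_subset_closedBall hq), sub_self, norm_zero] at hmq
  exact hmq.not_gt hm

section Limit

variable {ι : Type*} {l : Filter ι} {F : ι → ℂ → ℂ} {f : ℂ → ℂ} {W : Set ℂ}

theorem eventually_ball_subset_image (hW : IsOpen W) (hF : ∀ n, DifferentiableOn ℂ (F n) W)
    (hf : ContinuousOn f W) (hlim : TendstoUniformlyOn F f l W) {x : ℂ} (hx : x ∈ W)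
    (hne : ∀ᶠ z in 𝓝[≠] x, f z ≠ f x) : ∃ η > 0, ∀ᶠ n in l, ball (f x) η ⊆ F n '' W := by
  obtain ⟨ρ, hρ, hρW, m, hm, hfm⟩ := exists_sphere_norm_sub_ge (hW.mem_nhds hx) hf hne
  refine ⟨m / 8, by positivity, ?_⟩
  filter_upwards [Metric.tendstoUniformlyOn_iff.1 hlim (m / 8) (by positivity)] with n hn
  have hFm : ∀ z ∈ sphere x ρ, m / 2 ≤ ‖F n z - F n x‖ := by
    intro z hz
    have hzW := hn z (hρW (sphere_subset_closedBall hz))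
    have hxW := hn x hx
    have hmz := hfm z hz
    rw [← dist_eq_norm] at hmz ⊢
    rw [dist_comm] at hxW
    linarith [dist_triangle4 (f z) (F n z) (F n x) (f x)]
  have hcl : DiffContOnCl ℂ (F n) (ball x ρ) := by
    refine DifferentiableOn.diffContOnCl ?_
    rw [closure_ball x hρ.ne']
    exact (hF n).mono hρW
  have hball : ball (F n x) (m / 2 / 2) ⊆ F n '' closedBall x ρ :=
    hcl.ball_subset_image_closedBall hρ hFm
      (frequently_ne_of_norm_sub_ge hW (hF n) hρ hρW (half_pos hm) hFm)
  refine (ball_subset_ball' ?_).trans (hball.trans (image_mono hρW))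
  linarith [hn x hx]

theorem injOn_of_tendstoUniformlyOn [l.NeBot] (hW : IsOpen W)
    (hF : ∀ n, DifferentiableOn ℂ (F n) W) (hFi : ∀ n, InjOn (F n) W) (hf : ContinuousOn f W)
    (hlim : TendstoUniformlyOn F f l W) (hne : ∀ x ∈ W, ∀ᶠ z in 𝓝[≠] x, f z ≠ f x) :
    InjOn f W := by
  intro x hx y hy hxy
  by_contra hxy'
  obtain ⟨A, B, hA, hB, hxA, hyB, hAB⟩ := t2_separation hxy'
  have himage : ∀ {V : Set ℂ} {z : ℂ}, IsOpen V → z ∈ V → z ∈ W →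
      ∀ᶠ n in l, f z ∈ F n '' (V ∩ W) := by
    intro V z hV hzV hz
    obtain ⟨η, hη, hball⟩ := eventually_ball_subset_image (hV.inter hW)
      (fun n => (hF n).mono inter_subset_right) (hf.mono inter_subset_right)
      (hlim.mono inter_subset_right) ⟨hzV, hz⟩ (hne z hz)
    exact hball.mono fun n hn => hn (mem_ball_self hη)
  obtain ⟨n, ⟨u, hu, hux⟩, v, hv, hvy⟩ := ((himage hA hxA hx).and (himage hB hyB hy)).exists
  have huv : u = v := hFi n hu.2 hv.2 (by rw [hux, hvy, hxy])
  exact disjoint_left.1 hAB hu.1 (huv ▸ hv.1)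

theorem exists_ne_of_ball_subset_image [l.NeBot] (hlim : TendstoUniformlyOn F f l W) {x : ℂ}
    (hx : x ∈ W) {r : ℝ} (hr : 0 < r) (hball : ∀ n, ball (F n x) r ⊆ F n '' W) :
    ∃ y ∈ W, f y ≠ f x := by
  by_contra! hconst
  obtain ⟨n, hn⟩ := (Metric.tendstoUniformlyOn_iff.1 hlim (r / 4) (by positivity)).exists
  have hdist : dist (F n x + (r / 2 : ℝ)) (F n x) = r / 2 := by
    rw [dist_self_add_left, norm_real, Real.norm_of_nonneg (by positivity)]
  obtain ⟨z, hz, hzn⟩ := hball n (mem_ball.2 (hdist.trans_lt (half_lt_self hr)))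
  have hzf := hn z hz
  rw [hconst z hz] at hzf
  rw [← hzn] at hdist
  linarith [hn x hx, dist_triangle_left (F n z) (F n x) (f x)]

end Limit

/-! ### Limits of complements -/

/-- The Kuratowski upper limit of the sets `B n` along `l`: the points all of whose
neighbourhoods meet `B n` for frequently many `n`. It serves to pass to the limit in sequences
of continua. -/
def upperLimit {X ι : Type*} [TopologicalSpace X] (B : ι → Set X) (l : Filter ι) : Set X :=
  {x | ∀ U ∈ 𝓝 x, ∃ᶠ n in l, (B n ∩ U).Nonempty}

section UpperLimit

variable {X ι : Type*} [TopologicalSpace X] {A B : ι → Set X} {l : Filter ι} {K : Set X}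

theorem isClosed_upperLimit : IsClosed (upperLimit B l) := by
  refine isClosed_of_closure_subset fun x hx U hU => ?_
  obtain ⟨V, hVU, hV, hxV⟩ := mem_nhds_iff.1 hU
  obtain ⟨y, hyV, hy⟩ := mem_closure_iff.1 hx V hV hxV
  exact (hy V (hV.mem_nhds hyV)).mono fun n hn => hn.mono (inter_subset_inter_right _ hVU)

theorem mem_upperLimit_of_tendsto [l.NeBot] {b : ι → X} {x : X} (hb : ∀ᶠ n in l, b n ∈ B n)
    (hx : Tendsto b l (𝓝 x)) : x ∈ upperLimit B l := fun _ hU =>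
  (hb.and (hx.eventually_mem hU)).frequently.mono fun n hn => ⟨b n, hn⟩

theorem upperLimit_mono (h : ∀ᶠ n in l, B n ⊆ A n) : upperLimit B l ⊆ upperLimit A l :=
  fun _ hx U hU => ((hx U hU).and_eventually h).mono fun _ hn =>
    hn.1.mono (inter_subset_inter_left U hn.2)

theorem upperLimit_subset_of_isClosed (hK : IsClosed K) (h : ∀ᶠ n in l, B n ⊆ K) :
    upperLimit B l ⊆ K := by
  intro x hx
  by_contra hxK
  obtain ⟨n, ⟨y, hyB, hyK⟩, hn⟩ := ((hx _ (hK.isOpen_compl.mem_nhds hxK)).and_eventually h).exists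
  exact hyK (hn hyB)

theorem eventually_subset_of_upperLimit_subset (hK : IsCompact K) (h : ∀ᶠ n in l, B n ⊆ K)
    {U : Set X} (hU : IsOpen U) (hBU : upperLimit B l ⊆ U) : ∀ᶠ n in l, B n ⊆ U := by
  have hdisj : ∀ᶠ n in l, Disjoint (B n) (K \ U) := by
    refine (hK.diff hU).induction_on (p := fun s => ∀ᶠ n in l, Disjoint (B n) s) (by simp)
      (fun s t hst ht => ht.mono fun n hn => hn.mono_right hst)
      (fun s t hs ht => (hs.and ht).mono fun n hn => disjoint_union_right.2 hn) fun x hx => ?_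
    have hxB : ¬ ∀ V ∈ 𝓝 x, ∃ᶠ n in l, (B n ∩ V).Nonempty := fun hxB => hx.2 (hBU hxB)
    push Not at hxB
    obtain ⟨V, hV, hBV⟩ := hxB
    exact ⟨V, mem_nhdsWithin_of_mem_nhds hV, hBV.mono fun n hn => disjoint_iff_inter_eq_empty.2 hn⟩
  filter_upwards [h, hdisj] with n hnK hn y hy
  by_contra hyU
  exact disjoint_left.1 hn hy ⟨hnK hy, hyU⟩

theorem isPreconnected_upperLimit [NormalSpace X] [l.NeBot] (hK : IsCompact K)
    (hBK : ∀ᶠ n in l, B n ⊆ K) (hB : ∀ᶠ n in l, IsPreconnected (B n)) {b : ι → X} {x : X}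
    (hb : ∀ᶠ n in l, b n ∈ B n) (hx : Tendsto b l (𝓝 x)) : IsPreconnected (upperLimit B l) := by
  have hxL : x ∈ upperLimit B l := mem_upperLimit_of_tendsto hb hx
  have subset_of_mem : ∀ u v : Set X, IsClosed u → IsClosed v → upperLimit B l ⊆ u ∪ v →
      Disjoint u v → x ∈ u → upperLimit B l ⊆ u := by
    intro u v hu hv huv hdisj hxu y hy
    obtain ⟨U, V, hU, hV, huU, hvV, hUV⟩ := normal_separation hu hv hdisj
    have hBUV := eventually_subset_of_upperLimit_subset hK hBK (hU.union hV)
      (huv.trans (union_subset_union huU hvV))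
    have hBU : ∀ᶠ n in l, B n ⊆ U := by
      filter_upwards [hB, hBUV, hb, hx.eventually_mem (hU.mem_nhds (huU hxu))]
        with n hn hnUV hbn hbU
      exact hn.subset_left_of_subset_union hU hV hUV hnUV ⟨b n, hbn, hbU⟩
    refine (huv hy).resolve_right fun hyv => ?_
    obtain ⟨n, ⟨z, hzB, hzV⟩, hn⟩ := ((hy V (hV.mem_nhds (hvV hyv))).and_eventually hBU).exists
    exact disjoint_left.1 hUV (hn hzB) hzV
  rw [isPreconnected_iff_subset_of_fully_disjoint_closed isClosed_upperLimit]
  intro u v hu hv huv hdisj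
  rcases huv hxL with hxu | hxv
  · exact .inl (subset_of_mem u v hu hv huv hdisj hxu)
  · exact .inr (subset_of_mem v u hv hu (union_comm u v ▸ huv) hdisj.symm hxv)

end UpperLimit

theorem UnifLocallyConnectedSeq.comp {A : ℕ → Set ℂ} (hA : UnifLocallyConnectedSeq A)
    (k : ℕ → ℕ) : UnifLocallyConnectedSeq fun n => A (k n) := fun ε hε =>
  (hA ε hε).imp fun _ hδ => ⟨hδ.1, fun n => hδ.2 (k n)⟩

theorem UnifLocallyConnectedSeq.locallyConnectedSet_of_upperLimit_subset {A : ℕ → Set ℂ}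
    {A₀ : Set ℂ} (hA : UnifLocallyConnectedSeq A) (hsub : upperLimit A atTop ⊆ A₀)
    (happrox : ∀ b ∈ A₀, ∃ u : ℕ → ℂ, Tendsto u atTop (𝓝 b) ∧ ∀ᶠ n in atTop, u n ∈ A n) :
    LocallyConnectedSet A₀ := by
  intro ε hε
  obtain ⟨δ, hδ, hjoin⟩ := hA (ε / 3) (by positivity)
  refine ⟨δ, hδ, fun b hb c hc hbc => ?_⟩
  obtain ⟨u, hub, huA⟩ := happrox b hb
  obtain ⟨v, hvc, hvA⟩ := happrox c hc
  have hex : ∀ᶠ n in atTop, JoinedByContinuumIn (A n) (u n) (v n) (ε / 3) := by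
    filter_upwards [huA, hvA, (hub.dist hvc).eventually_lt_const hbc] with n hun hvn huv
    exact hjoin n _ hun _ hvn huv
  obtain ⟨B, hB⟩ := hex.choice
  simp only [eventually_and] at hB
  obtain ⟨hBA, hBc, hBconn, huB, hvB, hBdiam⟩ := hB
  have hBball : ∀ᶠ n in atTop, B n ⊆ closedBall b (ε / 2) := by
    filter_upwards [hBc, huB, hBdiam, hub.eventually_mem (closedBall_mem_nhds b
      (show 0 < ε / 6 by positivity))] with n hnc hun hdiam hunb y hy
    have hyu := (dist_le_diam_of_mem hnc.isBounded hy hun).trans hdiam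
    rw [mem_closedBall] at hunb ⊢
    linarith [dist_triangle y (u n) b]
  have hLball := upperLimit_subset_of_isClosed isClosed_closedBall hBball
  have hbL : b ∈ upperLimit B atTop := mem_upperLimit_of_tendsto huB hub
  refine ⟨upperLimit B atTop, (upperLimit_mono hBA).trans hsub,
    (isCompact_closedBall b _).of_isClosed_subset isClosed_upperLimit hLball,
    ⟨⟨b, hbL⟩, isPreconnected_upperLimit (isCompact_closedBall b _) hBball
      (hBconn.mono fun n hn => hn.isPreconnected) huB hub⟩,
    hbL, mem_upperLimit_of_tendsto hvB hvc, ?_⟩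
  calc diam (upperLimit B atTop) ≤ diam (closedBall b (ε / 2)) :=
        diam_mono hLball isBounded_closedBall
    _ ≤ 2 * (ε / 2) := diam_closedBall (by positivity)
    _ = ε := by ring

section LimitComplement

variable {ι : Type*} {l : Filter ι} {F : ι → ℂ → ℂ} {f : ℂ → ℂ} {W : Set ℂ}

theorem upperLimit_compl_image_subset (hW : IsOpen W) (hF : ∀ n, DifferentiableOn ℂ (F n) W)
    (hf : ContinuousOn f W) (hlim : TendstoUniformlyOn F f l W)
    (hne : ∀ x ∈ W, ∀ᶠ z in 𝓝[≠] x, f z ≠ f x) :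
    upperLimit (fun n => (F n '' W)ᶜ) l ⊆ (f '' W)ᶜ := by
  rintro _ hlimit ⟨x, hx, rfl⟩
  obtain ⟨η, hη, hball⟩ := eventually_ball_subset_image hW hF hf hlim hx (hne x hx)
  obtain ⟨n, ⟨y, hyF, hyη⟩, hn⟩ :=
    ((hlimit _ (ball_mem_nhds (f x) hη)).and_eventually hball).exists
  exact hyF (hn hyη)

theorem exists_tendsto_compl_image (hW : IsOpen W) (hWc : IsPreconnected W)
    (hWn : W.Nontrivial) (hK : IsCompact (closure W))
    (hFc : ∀ n, ContinuousOn (F n) (closure W)) (hF : ∀ n, DifferentiableOn ℂ (F n) W)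
    (hFi : ∀ n, InjOn (F n) W) (hf : ContinuousOn f (closure W))
    (hlim : TendstoUniformlyOn F f l (closure W)) {b : ℂ} (hb : b ∈ (f '' W)ᶜ) :
    ∃ u : ι → ℂ, Tendsto u l (𝓝 b) ∧ ∀ᶠ n in l, u n ∈ (F n '' W)ᶜ := by
  by_cases hbc : b ∈ f '' closure W
  · obtain ⟨x, hx, rfl⟩ := hbc
    have : (𝓝[W] x).NeBot := mem_closure_iff_nhdsWithin_neBot.1 hx
    refine ⟨fun n => F n x, hlim.tendsto_at hx, .of_forall fun n => ?_⟩
    exact notMem_image_of_tendsto hW (fun _ => isOpen_image_of_injOn hW hWc hWn (hF n) (hFi n))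
      (hFi n) (l := 𝓝[W] x) (u := id) nhdsWithin_le_nhds self_mem_nhdsWithin
      (fun hxW => hb (mem_image_of_mem f hxW)) ((hFc n x hx).mono subset_closure)
  · obtain ⟨d, hd, hdb⟩ := Metric.isOpen_iff.1
      (hK.image_of_continuousOn hf).isClosed.isOpen_compl b hbc
    refine ⟨fun _ => b, tendsto_const_nhds, ?_⟩
    filter_upwards [Metric.tendstoUniformlyOn_iff.1 hlim d hd] with n hn
    rintro ⟨z, hz, rfl⟩
    exact hdb (hn z (subset_closure hz)) (mem_image_of_mem f (subset_closure hz))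

theorem locallyConnectedSet_compl_image_of_tendstoUniformlyOn {F : ℕ → ℂ → ℂ} (hW : IsOpen W)
    (hWc : IsPreconnected W) (hWn : W.Nontrivial) (hK : IsCompact (closure W))
    (hFc : ∀ n, ContinuousOn (F n) (closure W)) (hF : ∀ n, DifferentiableOn ℂ (F n) W)
    (hFi : ∀ n, InjOn (F n) W) (hlim : TendstoUniformlyOn F f atTop (closure W))
    (hne : ∀ x ∈ W, ∀ᶠ z in 𝓝[≠] x, f z ≠ f x)
    (hulc : UnifLocallyConnectedSeq fun n => (F n '' W)ᶜ) : LocallyConnectedSet (f '' W)ᶜ := by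
  have hf : ContinuousOn f (closure W) := hlim.continuousOn (.of_forall hFc)
  exact hulc.locallyConnectedSet_of_upperLimit_subset
    (upperLimit_compl_image_subset hW hF (hf.mono subset_closure) (hlim.mono subset_closure) hne)
    fun _ => exists_tendsto_compl_image hW hWc hWn hK hFc hF hFi hf hlim

end LimitComplement

theorem nontrivial_unit_ball : (ball (0 : ℂ) 1).Nontrivial :=
  ⟨0, mem_ball_self one_pos, 2⁻¹, by norm_num, by norm_num⟩

theorem exists_equicontinuousOnSet_closedBall_extension {M : ℝ} {Φ : ℕ → ℂ → ℂ}
    (h : EquicontinuousOnSet Φ (ball 0 1))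
    (hM : ∀ n, MapsTo (Φ n) (ball (0 : ℂ) 1) (ball (0 : ℂ) M)) :
    ∃ Ψ : ℕ → ℂ → ℂ, (∀ n, ContinuousOn (Ψ n) (closedBall 0 1)) ∧
      (∀ n, EqOn (Ψ n) (Φ n) (ball 0 1)) ∧ EquicontinuousOnSet Ψ (closedBall 0 1) ∧
      ∀ n, MapsTo (Ψ n) (closedBall 0 1) (closedBall 0 M) := by
  have hcl : closure (ball (0 : ℂ) 1) = closedBall 0 1 := closure_ball _ one_ne_zero
  have hext : EquicontinuousOnSet (fun n => extendFrom (ball 0 1) (Φ n)) (closedBall 0 1) :=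
    hcl ▸ h.closure
  have hΨc := fun n => (hext.uniformContinuousOn n).continuousOn
  have hΨΦ : ∀ n, EqOn (extendFrom (ball 0 1) (Φ n)) (Φ n) (ball 0 1) := fun n =>
    extendFrom_extends (h.uniformContinuousOn n).continuousOn
  refine ⟨_, hΨc, hΨΦ, hext, fun n => ?_⟩
  rw [← hcl]
  exact (((hM n).mono_right ball_subset_closedBall).congr (hΨΦ n).symm).closure_of_continuousOn
    (hcl.symm ▸ hΨc n) |>.mono_right isClosed_closedBall.closure_subset

theorem injOn_and_locallyConnectedSet_of_tendstoUniformlyOn {r : ℝ} (hr : 0 < r)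
    {F : ℕ → ℂ → ℂ} {f : ℂ → ℂ} (hFc : ∀ n, ContinuousOn (F n) (closedBall 0 1))
    (hF : ∀ n, DifferentiableOn ℂ (F n) (ball 0 1)) (hFi : ∀ n, InjOn (F n) (ball 0 1))
    (hlim : TendstoUniformlyOn F f atTop (closedBall 0 1))
    (hball : ∀ n, ball (F n 0) r ⊆ F n '' ball 0 1)
    (hulc : UnifLocallyConnectedSeq fun n => (F n '' ball 0 1)ᶜ) :
    InjOn f (ball 0 1) ∧ DifferentiableOn ℂ f (ball 0 1) ∧
      LocallyConnectedSet (f '' ball 0 1)ᶜ := by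
  have hcl : closure (ball (0 : ℂ) 1) = closedBall 0 1 := closure_ball _ one_ne_zero
  have hconn : IsPreconnected (ball (0 : ℂ) 1) := (convex_ball 0 1).isPreconnected
  have h0 : (0 : ℂ) ∈ ball 0 1 := mem_ball_self one_pos
  have hlim' : TendstoUniformlyOn F f atTop (ball 0 1) := hlim.mono ball_subset_closedBall
  have hfd : DifferentiableOn ℂ f (ball 0 1) :=
    hlim'.tendstoLocallyUniformlyOn.differentiableOn (.of_forall hF) isOpen_ball
  obtain ⟨y, hy, hy0⟩ := exists_ne_of_ball_subset_image hlim' h0 hr hball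
  have hne : ∀ x ∈ ball (0 : ℂ) 1, ∀ᶠ z in 𝓝[≠] x, f z ≠ f x := fun _ =>
    eventually_ne_of_ne isOpen_ball hconn hfd hy h0 hy0
  rw [← hcl] at hFc hlim
  exact ⟨injOn_of_tendstoUniformlyOn isOpen_ball hF hFi hfd.continuousOn hlim' hne, hfd,
    locallyConnectedSet_compl_image_of_tendstoUniformlyOn isOpen_ball hconn nontrivial_unit_ball
      (hcl ▸ isCompact_closedBall 0 1) hFc hF hFi hlim hne hulc⟩

theorem stmt0_general {r M : ℝ} (hr : 0 < r) {Φ : ℕ → ℂ → ℂ}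
    (hd : ∀ n, DifferentiableOn ℂ (Φ n) (ball (0 : ℂ) 1))
    (hi : ∀ n, InjOn (Φ n) (ball (0 : ℂ) 1))
    (hM : ∀ n, MapsTo (Φ n) (ball (0 : ℂ) 1) (ball (0 : ℂ) M))
    (hball : ∀ n, ball (Φ n 0) r ⊆ Φ n '' ball (0 : ℂ) 1)
    (hulc : UnifLocallyConnectedSeq fun n => (Φ n '' ball (0 : ℂ) 1)ᶜ) :
    ∃ Ψ : ℕ → ℂ → ℂ,
      (∀ n, ContinuousOn (Ψ n) (closedBall (0 : ℂ) 1) ∧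
        EqOn (Ψ n) (Φ n) (ball (0 : ℂ) 1)) ∧
      EquicontinuousOnSet Ψ (closedBall (0 : ℂ) 1) ∧
      ∃ k : ℕ → ℕ, StrictMono k ∧
        ∃ Φlim : ℂ → ℂ,
          ContinuousOn Φlim (closedBall (0 : ℂ) 1) ∧
          TendstoUniformlyOn (fun m => Ψ (k m)) Φlim atTop (closedBall (0 : ℂ) 1) ∧
          InjOn Φlim (ball (0 : ℂ) 1) ∧
          DifferentiableOn ℂ Φlim (ball (0 : ℂ) 1) ∧
          IsOpen (Φlim '' ball (0 : ℂ) 1) ∧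
          SimplyConnectedSpace (Φlim '' ball (0 : ℂ) 1) ∧
          LocallyConnectedSet ((Φlim '' ball (0 : ℂ) 1)ᶜ) := by
  obtain ⟨Ψ, hΨc, hΨΦ, hΨe, hΨM⟩ := exists_equicontinuousOnSet_closedBall_extension
    (equicontinuousOnSet_ball hr hd hi hM hball hulc) hM
  refine ⟨Ψ, fun n => ⟨hΨc n, hΨΦ n⟩, hΨe, ?_⟩
  obtain ⟨k, hk, f, hlim⟩ := hΨe.exists_subseq_tendstoUniformlyOn (isCompact_closedBall 0 1)
    (isCompact_closedBall 0 M) hΨM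
  have himage : ∀ n, Ψ n '' ball 0 1 = Φ n '' ball 0 1 := fun n => (hΨΦ n).image_eq
  obtain ⟨hfi, hfd, hflc⟩ := injOn_and_locallyConnectedSet_of_tendstoUniformlyOn hr
    (fun n => hΨc (k n)) (fun n => (hd (k n)).congr (hΨΦ (k n)))
    (fun n => (hi (k n)).congr (hΨΦ (k n)).symm) hlim
    (fun n => by rw [himage, hΨΦ (k n) (mem_ball_self one_pos)]; exact hball (k n))
    (by simpa only [himage] using hulc.comp k)
  have hfopen : ∀ s ⊆ ball (0 : ℂ) 1, IsOpen s → IsOpen (f '' s) := fun _ =>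
    isOpen_image_of_injOn isOpen_ball (convex_ball 0 1).isPreconnected nontrivial_unit_ball hfd hfi
  exact ⟨k, hk, f, hlim.continuousOn (.of_forall fun n => hΨc (k n)), hlim, hfi, hfd,
    hfopen _ subset_rfl isOpen_ball,
    isSimplyConnected_image_of_injOn (isSimplyConnected_of_convex (convex_ball 0 1)
      ⟨0, mem_ball_self one_pos⟩) isOpen_ball hfd.continuousOn hfi hfopen, hflc⟩

theorem stmt0 (μ M : ℝ) (hμ : 0 < μ) (hμM : μ < M)
    (Ω : ℕ → Set ℂ) (Φ : ℕ → ℂ → ℂ)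
    (hopen : ∀ n, IsOpen (Ω n))
    (hsc : ∀ n, SimplyConnectedSpace (Ω n))
    (hsub : ∀ n, ball (0:ℂ) μ ⊆ Ω n ∧ Ω n ⊆ ball (0:ℂ) M)
    (hulc : UnifLocallyConnectedSeq (fun n => (Ω n)ᶜ))
    (hΦhol : ∀ n, DifferentiableOn ℂ (Φ n) (ball (0:ℂ) 1))
    (hΦbij : ∀ n, Set.BijOn (Φ n) (ball (0:ℂ) 1) (Ω n))
    (hΦ0 : ∀ n, Φ n 0 = 0)
    (hΦ' : ∀ n, ∃ c : ℝ, 0 < c ∧ deriv (Φ n) 0 = (c : ℂ)) :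
    ∃ Ψ : ℕ → ℂ → ℂ,
      (∀ n, ContinuousOn (Ψ n) (closedBall (0:ℂ) 1) ∧
        Set.EqOn (Ψ n) (Φ n) (ball (0:ℂ) 1)) ∧
      EquicontinuousOnSet Ψ (closedBall (0:ℂ) 1) ∧
      ∃ k : ℕ → ℕ, StrictMono k ∧
        ∃ Φlim : ℂ → ℂ,
          ContinuousOn Φlim (closedBall (0:ℂ) 1) ∧
          TendstoUniformlyOn (fun m => Ψ (k m)) Φlim Filter.atTop (closedBall (0:ℂ) 1) ∧
          Set.InjOn Φlim (ball (0:ℂ) 1) ∧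
          DifferentiableOn ℂ Φlim (ball (0:ℂ) 1) ∧
          IsOpen (Φlim '' ball (0:ℂ) 1) ∧
          SimplyConnectedSpace (Φlim '' ball (0:ℂ) 1) ∧
          LocallyConnectedSet ((Φlim '' ball (0:ℂ) 1)ᶜ) := by
  have himage : ∀ n, Φ n '' ball 0 1 = Ω n := fun n => (hΦbij n).image_eq
  exact stmt0_general hμ hΦhol (fun n => (hΦbij n).injOn)
    (fun n => (hΦbij n).mapsTo.mono_right (hsub n).2)
    (fun n => by rw [himage, hΦ0]; exact (hsub n).1) (by simpa only [himage] using hulc)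
end

section
/- Let μ > 0 and let Φ_n : 𝔻 → ℂ (n ≥ 1) be holomorphic injective maps such that B(0,μ) ⊆ Φ_n(𝔻) for every n. Suppose Φ_n → Φ uniformly on 𝔻. Then Φ is holomorphic on 𝔻, nonconstant, and injective on 𝔻, and the image Φ(𝔻) is an open, simply connected subset of ℂ. -/
open Complex Metric Set

/-!
Uniform convergence puts every point covered by all the maps `F n` into the closure of the image of
the limit `f`, so `f` is not constant. Injectivity is Hurwitz's theorem: on a small circle about `a`
the function `f - f a` is bounded away from `0`, hence so is `F n - F n a` for large `n`, and the
quantitative open mapping theorem makes `F n` attain the value `f a` near `a`. If `f a = f b` with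
`a ≠ b`, disjoint neighbourhoods of `a` and `b` then contradict the injectivity of `F n`. Finally,
an injective holomorphic map is a homeomorphism onto an open image.
-/

open Filter Topology

section Covering

variable {ι α β : Type*} {F : ι → α → β} {f : α → β} {p : Filter ι} {s : Set α}

lemma mem_closure_image_of_tendstoUniformlyOn [UniformSpace β] (hF : TendstoUniformlyOn F f p s)
    {y : β} (hy : ∃ᶠ n in p, y ∈ F n '' s) : y ∈ closure (f '' s) := by
  rw [UniformSpace.mem_closure_iff_symm_ball]
  intro V hV hVsymm
  obtain ⟨n, ⟨x, hx, rfl⟩, hn⟩ := (hy.and_eventually (hF V hV)).exists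
  exact ⟨f x, mem_image_of_mem f hx, hVsymm.symm _ _ (hn x hx)⟩

lemma nontrivial_image_of_tendstoUniformlyOn [UniformSpace β] [T1Space β]
    (hF : TendstoUniformlyOn F f p s) {t : Set β} (ht : t.Nontrivial)
    (hcov : ∀ y ∈ t, ∃ᶠ n in p, y ∈ F n '' s) : (f '' s).Nontrivial := by
  have hsub : t ⊆ closure (f '' s) := fun y hy ↦
    mem_closure_image_of_tendstoUniformlyOn hF (hcov y hy)
  rw [← not_subsingleton_iff, ← subsingleton_closure, not_subsingleton_iff]
  exact ht.mono hsub

end Covering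

section Hurwitz

lemma eventually_ne_of_nontrivial_image {𝕜 E : Type*} [NontriviallyNormedField 𝕜]
    [NormedAddCommGroup E] [NormedSpace 𝕜 E] {f : 𝕜 → E} {U : Set 𝕜} (hf : AnalyticOnNhd 𝕜 f U)
    (hU : IsPreconnected U) (himage : (f '' U).Nontrivial) {a : 𝕜} (ha : a ∈ U) :
    ∀ᶠ z in 𝓝[≠] a, f z ≠ f a := by
  by_contra hfreq
  have hconst : EqOn f (fun _ ↦ f a) U :=
    hf.eqOn_of_preconnected_of_frequently_eq analyticOnNhd_const hU ha
      ((not_eventually.1 hfreq).mono fun _ ↦ not_not.1)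
  have hsub : f '' U ⊆ {f a} := image_subset_iff.2 hconst
  exact himage.not_subsingleton (subsingleton_singleton.anti hsub)

lemma exists_sphere_dist_ge {X Y : Type*} [PseudoMetricSpace X] [ProperSpace X] [MetricSpace Y]
    {f : X → Y} {a : X} {U : Set X} (hU : U ∈ 𝓝 a) (hf : ContinuousOn f U)
    (hne : ∀ᶠ z in 𝓝[≠] a, f z ≠ f a) :
    ∃ r > 0, closedBall a r ⊆ U ∧ ∃ δ > 0, ∀ z ∈ sphere a r, δ ≤ dist (f z) (f a) := by
  obtain ⟨r, hr, hball⟩ := nhds_basis_closedBall.mem_iff.1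
    (inter_mem hU (eventually_nhdsWithin_iff.1 hne))
  have hrU : closedBall a r ⊆ U := hball.trans inter_subset_left
  have hcont : ContinuousOn (fun z ↦ dist (f z) (f a)) (sphere a r) :=
    (continuous_id.dist continuous_const).comp_continuousOn
      (hf.mono (sphere_subset_closedBall.trans hrU))
  have hpos : ∀ z ∈ sphere a r, 0 < dist (f z) (f a) := fun z hz ↦
    dist_pos.2 ((hball (sphere_subset_closedBall hz)).2 (ne_of_mem_sphere hz hr.ne'))
  exact ⟨r, hr, hrU, (isCompact_sphere a r).exists_forall_le' hcont hpos⟩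

lemma frequently_ne_of_diffContOnCl_ball {E : Type*} [NormedAddCommGroup E] [NormedSpace ℂ E]
    [CompleteSpace E] {g : ℂ → E} {a z : ℂ} {r : ℝ} (hg : DiffContOnCl ℂ g (ball a r))
    (hz : z ∈ closedBall a r) (hne : g z ≠ g a) : ∃ᶠ w in 𝓝 a, g w ≠ g a := by
  intro hconst
  have hr : 0 < r := (dist_pos.2 (ne_of_apply_ne g hne)).trans_le hz
  have heq : EqOn g (fun _ ↦ g a) (ball a r) :=
    (hg.differentiableOn.analyticOnNhd isOpen_ball).eqOn_of_preconnected_of_eventuallyEq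
      analyticOnNhd_const (convex_ball a r).isPreconnected (mem_ball_self hr)
      (hconst.mono fun _ ↦ not_not.1)
  rw [← closure_ball a hr.ne'] at hz
  exact hne (heq.of_subset_closure hg.continuousOn continuousOn_const subset_closure subset_rfl hz)

lemma mem_image_closedBall_of_dist_lt {f g : ℂ → ℂ} {a : ℂ} {r δ : ℝ} (hr : 0 < r)
    (hg : DiffContOnCl ℂ g (ball a r)) (hf : ∀ z ∈ sphere a r, δ ≤ dist (f z) (f a))
    (hfg : ∀ z ∈ closedBall a r, dist (f z) (g z) < δ / 4) : f a ∈ g '' closedBall a r := by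
  have ha : dist (f a) (g a) < δ / 4 := hfg a (mem_closedBall_self hr.le)
  have hδ : 0 < δ := by linarith [dist_nonneg (x := f a) (y := g a)]
  have hsphere : ∀ z ∈ sphere a r, δ / 2 ≤ dist (g z) (g a) := fun z hz ↦ by
    have htri := dist_triangle4 (f z) (g z) (g a) (f a)
    rw [dist_comm (g a)] at htri
    linarith [hf z hz, hfg z (sphere_subset_closedBall hz)]
  obtain ⟨z, hz⟩ : (sphere a r).Nonempty := NormedSpace.sphere_nonempty.2 hr.le
  have hgz : g z ≠ g a := dist_pos.1 ((half_pos hδ).trans_le (hsphere z hz))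
  refine hg.ball_subset_image_closedBall hr (fun w hw ↦ dist_eq_norm (g w) (g a) ▸ hsphere w hw)
    (frequently_ne_of_diffContOnCl_ball hg (sphere_subset_closedBall hz) hgz) ?_
  rw [mem_ball]
  linarith

variable {ι : Type*} {F : ι → ℂ → ℂ} {f : ℂ → ℂ} {p : Filter ι} {U : Set ℂ}

lemma eventually_mem_image_of_tendstoLocallyUniformlyOn (hU : IsOpen U)
    (hF : ∀ᶠ n in p, DifferentiableOn ℂ (F n) U) (hf : ContinuousOn f U)
    (hlim : TendstoLocallyUniformlyOn F f p U) {a : ℂ} (ha : a ∈ U)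
    (hne : ∀ᶠ z in 𝓝[≠] a, f z ≠ f a) {V : Set ℂ} (hV : V ∈ 𝓝 a) :
    ∀ᶠ n in p, f a ∈ F n '' V := by
  obtain ⟨r, hr, hrUV, δ, hδ, hsphere⟩ := exists_sphere_dist_ge
    (inter_mem (hU.mem_nhds ha) hV) (hf.mono inter_subset_left) hne
  have hrU : closedBall a r ⊆ U := hrUV.trans inter_subset_left
  have hunif : TendstoUniformlyOn F f p (closedBall a r) :=
    (tendstoLocallyUniformlyOn_iff_forall_isCompact hU).1 hlim _ hrU (isCompact_closedBall a r)
  filter_upwards [hF, Metric.tendstoUniformlyOn_iff.1 hunif (δ / 4) (by positivity)] with n hFn hn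
  have hdiff : DiffContOnCl ℂ (F n) (ball a r) := hFn.diffContOnCl_ball hrU
  exact image_mono (hrUV.trans inter_subset_right)
    (mem_image_closedBall_of_dist_lt hr hdiff hsphere hn)

lemma injOn_of_tendstoLocallyUniformlyOn (hU : IsOpen U) (hUc : IsPreconnected U)
    (hF : ∀ᶠ n in p, DifferentiableOn ℂ (F n) U) (hinj : ∃ᶠ n in p, InjOn (F n) U)
    (hlim : TendstoLocallyUniformlyOn F f p U) (hf : (f '' U).Nontrivial) : InjOn f U := by
  have : p.NeBot := ⟨fun hp ↦ hinj (hp ▸ eventually_bot)⟩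
  have hdiff : DifferentiableOn ℂ f U := hlim.differentiableOn hF hU
  intro a ha b hb hab
  by_contra hne
  obtain ⟨V, W, hV, hW, hVW⟩ := t2_separation_nhds hne
  have hits : ∀ c ∈ U, ∀ N ∈ 𝓝 c, ∀ᶠ n in p, f c ∈ F n '' (N ∩ U) := fun c hc N hN ↦
    eventually_mem_image_of_tendstoLocallyUniformlyOn hU hF hdiff.continuousOn hlim hc
      (eventually_ne_of_nontrivial_image (hdiff.analyticOnNhd hU) hUc hf hc)
      (inter_mem hN (hU.mem_nhds hc))
  obtain ⟨n, hn, ⟨z, ⟨hzV, hzU⟩, hz⟩, ⟨w, ⟨hwW, hwU⟩, hw⟩⟩ :=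
    (hinj.and_eventually ((hits a ha V hV).and (hits b hb W hW))).exists
  have hzw : z = w := hn hzU hwU (by rw [hz, hw, hab])
  exact disjoint_left.1 hVW hzV (hzw ▸ hwW)

end Hurwitz

section Image

variable {f : ℂ → ℂ} {U : Set ℂ}

lemma isOpenEmbedding_domRestrict_of_differentiableOn (hU : IsOpen U) (hf : DifferentiableOn ℂ f U)
    (hinj : InjOn f U) : IsOpenEmbedding (U.domRestrict f) := by
  refine .of_continuous_injective_isOpenMap hf.continuousOn.domRestrict
    (injOn_iff_injective.1 hinj) (isOpenMap_iff_nhds_le.2 fun ⟨a, ha⟩ ↦ ?_)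
  have hnhds : 𝓝 (f a) ≤ map f (𝓝 a) := by
    refine (hf.analyticOnNhd hU a ha).eventually_constant_or_nhds_le_map_nhds.resolve_left ?_
    intro hconst
    have hsing : {a} ∈ 𝓝 a := by
      filter_upwards [hconst, hU.mem_nhds ha] with z hz hzU using hinj hzU ha hz
    exact infinite_of_mem_nhds a hsing (finite_singleton a)
  rwa [domRestrict_eq, ← map_map, map_nhds_subtype_coe_eq_nhds ha (hU.mem_nhds ha)]

lemma isSimplyConnected_image_of_differentiableOn (hU : IsOpen U) (hUs : IsSimplyConnected U)
    (hf : DifferentiableOn ℂ f U) (hinj : InjOn f U) : IsSimplyConnected (f '' U) := by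
  rw [← range_domRestrict]
  have := hUs.simplyConnectedSpace
  have hemb := isOpenEmbedding_domRestrict_of_differentiableOn hU hf hinj
  exact hemb.toHomeomorph.symm.toHomotopyEquiv.simplyConnectedSpace

end Image

theorem stmt1_general {ι : Type*} {p : Filter ι} {U T : Set ℂ} {F : ι → ℂ → ℂ} {f : ℂ → ℂ}
    (hU : IsOpen U) (hUs : IsSimplyConnected U) (hT : T.Nontrivial)
    (hhol : ∀ᶠ n in p, DifferentiableOn ℂ (F n) U) (hinj : ∃ᶠ n in p, InjOn (F n) U)
    (hcov : ∀ w ∈ T, ∃ᶠ n in p, w ∈ F n '' U) (hconv : TendstoUniformlyOn F f p U) :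
    DifferentiableOn ℂ f U ∧ (f '' U).Nontrivial ∧ InjOn f U ∧ IsOpen (f '' U) ∧
      IsSimplyConnected (f '' U) := by
  have hlim : TendstoLocallyUniformlyOn F f p U := hconv.tendstoLocallyUniformlyOn
  have : p.NeBot := ⟨fun hp ↦ hinj (hp ▸ eventually_bot)⟩
  have hdiff : DifferentiableOn ℂ f U := hlim.differentiableOn hhol hU
  have hnontriv : (f '' U).Nontrivial := nontrivial_image_of_tendstoUniformlyOn hconv hT hcov
  have hinjlim : InjOn f U := injOn_of_tendstoLocallyUniformlyOn hU
    hUs.isPathConnected.isConnected.isPreconnected hhol hinj hlim hnontriv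
  have hopen : IsOpen (f '' U) := range_domRestrict f U ▸
    (isOpenEmbedding_domRestrict_of_differentiableOn hU hdiff hinjlim).isOpen_range
  exact ⟨hdiff, hnontriv, hinjlim, hopen,
    isSimplyConnected_image_of_differentiableOn hU hUs hdiff hinjlim⟩

theorem stmt1 (μ : ℝ) (hμ : 0 < μ) (Φ : ℕ → ℂ → ℂ) (Φlim : ℂ → ℂ)
    (hhol : ∀ n, DifferentiableOn ℂ (Φ n) (ball (0:ℂ) 1))
    (hinj : ∀ n, Set.InjOn (Φ n) (ball (0:ℂ) 1))
    (hcov : ∀ n, ball (0:ℂ) μ ⊆ Φ n '' ball (0:ℂ) 1)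
    (hconv : TendstoUniformlyOn Φ Φlim Filter.atTop (ball (0:ℂ) 1)) :
    DifferentiableOn ℂ Φlim (ball (0:ℂ) 1) ∧
    (∃ z ∈ ball (0:ℂ) 1, ∃ w ∈ ball (0:ℂ) 1, Φlim z ≠ Φlim w) ∧
    Set.InjOn Φlim (ball (0:ℂ) 1) ∧
    IsOpen (Φlim '' ball (0:ℂ) 1) ∧
    SimplyConnectedSpace (Φlim '' ball (0:ℂ) 1) := by
  have hdisk : IsSimplyConnected (ball (0:ℂ) 1) :=
    have := (convex_ball (0:ℂ) 1).contractibleSpace (nonempty_ball.2 one_pos)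
    SimplyConnectedSpace.ofContractible _
  have hnontriv : (ball (0:ℂ) μ).Nontrivial :=
    (infinite_of_mem_nhds 0 (ball_mem_nhds 0 hμ)).nontrivial
  obtain ⟨hdiff, ⟨_, ⟨z, hz, rfl⟩, _, ⟨w, hw, rfl⟩, hne⟩, himage⟩ :=
    stmt1_general isOpen_ball hdisk hnontriv (.of_forall hhol) (.of_forall hinj)
      (fun _ hw ↦ .of_forall fun n ↦ hcov n hw) hconv
  exact ⟨hdiff, ⟨z, hz, w, hw, hne⟩, himage⟩
end

section
/- Let {Ω_n} (n ≥ 1) be a sequence of bounded, simply connected open subsets of ℂ, each containing 0 and each symmetric in the following sense: 0 ∈ Ω_n, Ω_n is invariant under complex conjugation, and for every r > 0 the set ∂B(0,r) \ Ω_n is either empty or a connected closed set containing a point on the positive real axis. For each n let Φ_n : 𝔻 → Ω_n be a holomorphic bijection with Φ_n(0) = 0 and Φ_n'(0) > 0, and suppose Φ_n → Φ uniformly on 𝔻, where Φ is a holomorphic bijection from 𝔻 onto some open simply connected set Ω ⊆ ℂ. Then Ω is symmetric in the same sense: 0 ∈ Ω, Ω is invariant under complex conjugation, and for every r > 0 the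 set ∂B(0,r) \ Ω is either empty or a connected closed set containing a point on the positive real axis. -/
open Complex Metric Set

/-- A domain `Ω ⊆ ℂ` is symmetric: `0 ∈ Ω`, `Ω` is invariant under complex conjugation,
and for every `r > 0` the set `∂B(0,r) \ Ω` is either empty or a connected closed set
containing a point on the positive real axis. -/
def SymmetricDomain (Ω : Set ℂ) : Prop :=
  (0:ℂ) ∈ Ω ∧ (∀ z : ℂ, z ∈ Ω ↔ (starRingEnd ℂ) z ∈ Ω) ∧
  ∀ r : ℝ, 0 < r →
    (Metric.sphere (0:ℂ) r \ Ω = ∅ ∨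
      (IsClosed (Metric.sphere (0:ℂ) r \ Ω) ∧ IsConnected (Metric.sphere (0:ℂ) r \ Ω) ∧
        ∃ x : ℝ, 0 < x ∧ (x:ℂ) ∈ Metric.sphere (0:ℂ) r \ Ω))

/-!
For an open set, symmetry means that `0 ∈ Ω` and that on each circle centred at `0` membership in
`Ω` passes from a point to every point of smaller or equal real part; invariance under conjugation
is the case of equal real parts. This monotonicity is robust under approximation. Uniform
convergence of the injective holomorphic maps `Φ n` enters only in the manner of Hurwitz: the
maximum principle for `1 / (G - w)` shows that if `F` covers a closed disk of radius `ε` about `w`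
and `G` is uniformly `ε / 2`-close to `F`, then `G` attains the value `w`. Hence each of `Ω n` and
the limit set contains every point whose `ε`-neighbourhood lies in the other.
-/

open Filter Topology ComplexConjugate

section HolomorphicImages

lemma exists_eq_zero_of_norm_lt_of_le_norm_frontier {E : Type*} [NormedAddCommGroup E]
    [NormedSpace ℂ E] [Nontrivial E] {g : E → ℂ} {V : Set E} {m : ℝ} {z₀ : E}
    (hV : Bornology.IsBounded V) (hg : DiffContOnCl ℂ g V) (hz₀ : z₀ ∈ V) (hlt : ‖g z₀‖ < m)
    (hle : ∀ z ∈ frontier V, m ≤ ‖g z‖) : ∃ z ∈ V, g z = 0 := by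
  by_contra! hne
  have hm : 0 < m := (norm_nonneg _).trans_lt hlt
  have hne_closure : ∀ z ∈ closure V, g z ≠ 0 := by
    rw [closure_eq_self_union_frontier]
    rintro z (hz | hz)
    · exact hne z hz
    · exact norm_pos_iff.1 (hm.trans_le (hle z hz))
  have hinv_le : ‖(g z₀)⁻¹‖ ≤ m⁻¹ := by
    refine norm_le_of_forall_mem_frontier_norm_le hV (hg.inv hne_closure) (fun z hz ↦ ?_)
      (subset_closure hz₀)
    rw [Pi.inv_apply, norm_inv]
    exact inv_anti₀ hm (hle z hz)
  rw [norm_inv, inv_le_inv₀ (norm_pos_iff.2 (hne z₀ hz₀)) hm] at hinv_le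
  exact hlt.not_ge hinv_le

lemma isCompact_inter_preimage_of_subset_image {X Y : Type*} [TopologicalSpace X]
    [TopologicalSpace Y] {f : X → Y} {s : Set X} {K : Set Y} (hf : IsInducing (s.domRestrict f))
    (hK : IsCompact K) (hKf : K ⊆ f '' s) : IsCompact (s ∩ f ⁻¹' K) := by
  rw [← Subtype.image_preimage_coe]
  refine IsCompact.image (hf.isCompact_preimage' hK ?_) continuous_subtype_val
  rwa [range_domRestrict]

variable {U : Set ℂ} {F G : ℂ → ℂ} {w : ℂ} {ε : ℝ}

lemma isOpenEmbedding_domRestrict_of_injOn (hU : IsOpen U) (hF : DifferentiableOn ℂ F U)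
    (hinj : InjOn F U) : IsOpenEmbedding (U.domRestrict F) := by
  refine .of_continuous_injective_isOpenMap
    (continuousOn_iff_continuous_domRestrict.1 hF.continuousOn) hinj.injective
    (.of_nhds_le fun ⟨z, hz⟩ ↦ ?_)
  have hUz : U ∈ 𝓝 z := hU.mem_nhds hz
  have hnonconst : ¬ ∀ᶠ x in 𝓝 z, F x = F z := fun hconst ↦ by
    have hne : ∃ᶠ x in 𝓝 z, x ≠ z := (eventually_mem_nhdsWithin (s := {z}ᶜ)).frequently.filter_mono
      nhdsWithin_le_nhds
    obtain ⟨x, hxz, hx, hxU⟩ := (hne.and_eventually (hconst.and hUz)).exists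
    exact hxz (hinj hxU hz hx)
  have hle := (hF.analyticAt hUz).eventually_constant_or_nhds_le_map_nhds.resolve_left hnonconst
  rwa [← map_nhds_subtype_coe_eq_nhds hz hUz, map_map] at hle

lemma mem_image_of_closedBall_subset_image (hU : IsOpen U) (hF : DifferentiableOn ℂ F U)
    (hG : DifferentiableOn ℂ G U) (hinj : InjOn F U) (hε : 0 < ε)
    (hsub : closedBall w ε ⊆ F '' U) (hFG : ∀ z ∈ U, dist (F z) (G z) < ε / 2) : w ∈ G '' U := by
  set V := U ∩ F ⁻¹' ball w ε
  have hV : IsOpen V := hF.continuousOn.isOpen_inter_preimage hU isOpen_ball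
  have hcompact : IsCompact (U ∩ F ⁻¹' closedBall w ε) :=
    isCompact_inter_preimage_of_subset_image
      (isOpenEmbedding_domRestrict_of_injOn hU hF hinj).isInducing (isCompact_closedBall w ε) hsub
  have hVsub : V ⊆ U ∩ F ⁻¹' closedBall w ε :=
    inter_subset_inter_right U (preimage_mono ball_subset_closedBall)
  have hclosure : closure V ⊆ U :=
    (closure_minimal hVsub hcompact.isClosed).trans inter_subset_left
  obtain ⟨z₀, hz₀, rfl⟩ := hsub (mem_closedBall_self hε.le)
  have hfrontier : ∀ z ∈ frontier V, ε / 2 ≤ ‖G z - F z₀‖ := by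
    intro z hz
    rw [hV.frontier_eq] at hz
    have hzU : z ∈ U := hclosure hz.1
    have hFz : ε ≤ dist (F z) (F z₀) := not_lt.1 fun h ↦ hz.2 ⟨hzU, h⟩
    rw [← dist_eq_norm]
    linarith [hFG z hzU, dist_triangle (F z) (G z) (F z₀)]
  obtain ⟨z, hzV, hz⟩ := exists_eq_zero_of_norm_lt_of_le_norm_frontier
    (hcompact.isBounded.subset hVsub) ((hG.sub_const (F z₀)).mono hclosure).diffContOnCl
    ⟨hz₀, mem_ball_self hε⟩ (by rw [← dist_eq_norm, dist_comm]; exact hFG z₀ hz₀) hfrontier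
  exact ⟨z, hzV.1, sub_eq_zero.1 hz⟩

end HolomorphicImages

section CircularSymmetry

/-- Circular symmetry about the negative real axis, in the spirit of Pólya: on every circle centred
at `0`, membership in `Ω` passes to points of smaller or equal real part. Comparing real parts
instead of arguments avoids the branch cut, and includes invariance under conjugation. -/
def CircularlySymmetric (Ω : Set ℂ) : Prop :=
  ∀ ⦃z w : ℂ⦄, ‖z‖ = ‖w‖ → z.re ≤ w.re → w ∈ Ω → z ∈ Ω

variable {Ω : Set ℂ}

lemma eq_or_eq_conj_of_norm_eq_of_re_eq {z w : ℂ} (hnorm : ‖z‖ = ‖w‖) (hre : z.re = w.re) :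
    z = w ∨ z = conj w := by
  have him : z.im ^ 2 = w.im ^ 2 := by
    have hsq : ‖z‖ ^ 2 = ‖w‖ ^ 2 := by rw [hnorm]
    rw [← normSq_eq_norm_sq, ← normSq_eq_norm_sq, normSq_apply, normSq_apply, hre] at hsq
    linarith
  exact (sq_eq_sq_iff_eq_or_eq_neg.1 him).imp (Complex.ext hre) (Complex.ext hre)

lemma SymmetricDomain.circularlySymmetric (hΩ : SymmetricDomain Ω) : CircularlySymmetric Ω := by
  intro z w hnorm hre hw
  obtain ⟨hzero, hconj, hcircle⟩ := hΩ
  by_contra hz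
  have hzpos : 0 < ‖z‖ := norm_pos_iff.2 fun h ↦ hz (h ▸ hzero)
  have hz_mem : z ∈ sphere (0 : ℂ) ‖z‖ \ Ω := ⟨by simp, hz⟩
  obtain hempty | ⟨-, hconn, x, hx, hx_mem⟩ := hcircle ‖z‖ hzpos
  · exact hempty.subset hz_mem
  have hxz : x = ‖z‖ := by simpa [abs_of_pos hx] using hx_mem.1
  have hwx : w.re ≤ (x : ℂ).re := by
    rw [ofReal_re, hxz, hnorm]
    exact re_le_norm w
  obtain ⟨u, ⟨hu, huΩ⟩, hure⟩ := hconn.isPreconnected.intermediate_value hz_mem hx_mem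
    continuous_re.continuousOn ⟨hre, hwx⟩
  have hunorm : ‖u‖ = ‖w‖ := (mem_sphere_zero_iff_norm.1 hu).trans hnorm
  obtain rfl | rfl := eq_or_eq_conj_of_norm_eq_of_re_eq hunorm hure
  · exact huΩ hw
  · exact huΩ ((hconj w).1 hw)

lemma isPreconnected_sphere_inter_le_re {r : ℝ} (hr : 0 ≤ r) (a : ℝ) :
    IsPreconnected {z ∈ sphere (0 : ℂ) r | a ≤ z.re} := by
  refine isPreconnected_of_forall (r : ℂ) fun z ⟨hz, haz⟩ ↦ ?_
  have hzr : ‖z‖ = r := mem_sphere_zero_iff_norm.1 hz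
  refine ⟨circleMap 0 r '' Icc (-|z.arg|) |z.arg|, ?_, ?_, ?_,
    isPreconnected_Icc.image _ (continuous_circleMap 0 r).continuousOn⟩
  · rintro _ ⟨t, ht, rfl⟩
    refine ⟨circleMap_mem_sphere 0 hr t, haz.trans ?_⟩
    have hcos : Real.cos z.arg ≤ Real.cos t := by
      rw [← Real.cos_abs z.arg, ← Real.cos_abs t]
      exact Real.cos_le_cos_of_nonneg_of_le_pi (abs_nonneg t) (abs_arg_le_pi z) (abs_le.2 ht)
    calc z.re = r * Real.cos z.arg := by rw [← hzr, norm_mul_cos_arg]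
      _ ≤ r * Real.cos t := mul_le_mul_of_nonneg_left hcos hr
      _ = (circleMap 0 r t).re := by simp [circleMap, exp_ofReal_mul_I_re]
  · exact ⟨0, by simp, by simp [circleMap]⟩
  · refine ⟨z.arg, abs_le.1 le_rfl, ?_⟩
    rw [circleMap_zero, ← hzr, norm_mul_exp_arg_mul_I]

lemma CircularlySymmetric.symmetricDomain (hΩ : CircularlySymmetric Ω) (hopen : IsOpen Ω)
    (hzero : (0 : ℂ) ∈ Ω) : SymmetricDomain Ω := by
  refine ⟨hzero, fun z ↦ ⟨hΩ (norm_conj z) (conj_re z).le, hΩ (norm_conj z).symm (conj_re z).ge⟩,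
    fun r hr ↦ (sphere (0 : ℂ) r \ Ω).eq_empty_or_nonempty.imp_right fun hne ↦ ?_⟩
  have hup : ∀ z ∈ sphere (0 : ℂ) r \ Ω,
      {w ∈ sphere (0 : ℂ) r | z.re ≤ w.re} ⊆ sphere (0 : ℂ) r \ Ω := by
    rintro z ⟨hz, hzΩ⟩ w ⟨hw, hre⟩
    rw [mem_sphere_zero_iff_norm] at hz hw
    exact ⟨by simpa using hw, fun hwΩ ↦ hzΩ (hΩ (hz.trans hw.symm) hre hwΩ)⟩
  have hr_mem : ∀ z ∈ sphere (0 : ℂ) r, (r : ℂ) ∈ {w ∈ sphere (0 : ℂ) r | z.re ≤ w.re} := by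
    intro z hz
    refine ⟨by simp [hr.le], ?_⟩
    rw [ofReal_re, ← mem_sphere_zero_iff_norm.1 hz]
    exact re_le_norm z
  have hpreconn : IsPreconnected (sphere (0 : ℂ) r \ Ω) :=
    isPreconnected_of_forall (r : ℂ) fun z hz ↦ ⟨_, hup z hz, hr_mem z hz.1, ⟨hz.1, le_rfl⟩,
      isPreconnected_sphere_inter_le_re hr.le z.re⟩
  obtain ⟨z, hz⟩ := hne
  exact ⟨isClosed_sphere.sdiff hopen, ⟨⟨z, hz⟩, hpreconn⟩, r, hr, hup z hz (hr_mem z hz.1)⟩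

end CircularSymmetry

section Approximation

/-- `A` and `B` are `ε`-close in the sense of Carathéodory kernels: each contains every point around
which the other contains a closed ball of radius `ε`. -/
def ErosionClose {X : Type*} [PseudoMetricSpace X] (ε : ℝ) (A B : Set X) : Prop :=
  (∀ x, closedBall x ε ⊆ A → x ∈ B) ∧ ∀ x, closedBall x ε ⊆ B → x ∈ A

lemma exists_norm_eq_dist_eq_abs_sub_norm {E : Type*} [NormedAddCommGroup E] [NormedSpace ℝ E]
    {x : E} (hx : x ≠ 0) {s : ℝ} (hs : 0 ≤ s) : ∃ y : E, ‖y‖ = s ∧ dist y x = |s - ‖x‖| := by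
  have hxpos : 0 < ‖x‖ := norm_pos_iff.2 hx
  refine ⟨(s / ‖x‖) • x, ?_, ?_⟩
  · rw [norm_smul, Real.norm_of_nonneg (by positivity), div_mul_cancel₀ _ hxpos.ne']
  · calc dist ((s / ‖x‖) • x) x = ‖(s / ‖x‖ - 1) • x‖ := by rw [dist_eq_norm, sub_smul, one_smul]
      _ = |(s / ‖x‖ - 1) * ‖x‖| := by rw [norm_smul, abs_mul, abs_norm, Real.norm_eq_abs]
      _ = |s - ‖x‖| := by rw [sub_one_mul, div_mul_cancel₀ _ hxpos.ne']

lemma eventually_exists_norm_eq_re_le_of_re_lt {z w : ℂ} (hnorm : ‖z‖ = ‖w‖)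
    (hre : z.re < w.re) : ∀ᶠ ε in 𝓝[>] (0 : ℝ), ∀ v ∈ closedBall z ε,
      ∃ u ∈ closedBall w ε, ‖v‖ = ‖u‖ ∧ v.re ≤ u.re := by
  have hw : w ≠ 0 := by
    rintro rfl
    rw [norm_zero, norm_eq_zero] at hnorm
    exact hre.ne (congrArg re hnorm)
  filter_upwards [nhdsWithin_le_nhds (eventually_le_nhds (half_pos (sub_pos.2 hre)))] with ε hε v hv
  obtain ⟨u, hu, huw⟩ := exists_norm_eq_dist_eq_abs_sub_norm hw (norm_nonneg v)
  have hvz : ‖v - z‖ ≤ ε := mem_closedBall_iff_norm.1 hv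
  have huw_le : ‖u - w‖ ≤ ε := by
    rw [← dist_eq_norm, huw, ← hnorm]
    exact (abs_norm_sub_norm_le v z).trans hvz
  refine ⟨u, mem_closedBall_iff_norm.2 huw_le, hu.symm, ?_⟩
  have hv_re : v.re - z.re ≤ ε := (re_le_norm (v - z)).trans hvz
  have hu_re : -ε ≤ u.re - w.re := (abs_le.1 ((abs_re_le_norm (u - w)).trans huw_le)).1
  linarith

lemma eventually_exists_norm_eq_re_le {z w : ℂ} (hnorm : ‖z‖ = ‖w‖) (hre : z.re ≤ w.re) :
    ∀ᶠ ε in 𝓝[>] (0 : ℝ), ∀ v ∈ closedBall z ε,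
      ∃ u ∈ closedBall w ε, ‖v‖ = ‖u‖ ∧ v.re ≤ u.re := by
  obtain heq | hlt := hre.eq_or_lt
  · refine .of_forall fun ε v hv ↦ ?_
    obtain rfl | rfl := eq_or_eq_conj_of_norm_eq_of_re_eq hnorm heq
    · exact ⟨v, hv, rfl, le_rfl⟩
    · refine ⟨conj v, ?_, (norm_conj v).symm, (conj_re v).ge⟩
      rwa [mem_closedBall, ← dist_conj_conj, conj_conj]
  · exact eventually_exists_norm_eq_re_le_of_re_lt hnorm hlt

lemma CircularlySymmetric.of_forall_exists_erosionClose {A : Set ℂ} (hA : IsOpen A)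
    (happrox : ∀ ε > 0, ∃ B, CircularlySymmetric B ∧ ErosionClose ε A B) :
    CircularlySymmetric A := by
  intro z w hnorm hre hw
  obtain ⟨ρ, hρ, hρA⟩ := isOpen_iff.1 hA w hw
  have hsmall : ∀ᶠ ε in 𝓝[>] (0 : ℝ), ε < ρ / 2 :=
    nhdsWithin_le_nhds (eventually_lt_nhds (half_pos hρ))
  obtain ⟨ε, hshift, hερ, hε⟩ :=
    ((eventually_exists_norm_eq_re_le hnorm hre).and
      (hsmall.and eventually_mem_nhdsWithin)).exists
  obtain ⟨B, hB, hAB, hBA⟩ := happrox ε hε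
  refine hBA z fun v hv ↦ ?_
  obtain ⟨u, hu, hvu, hvu_re⟩ := hshift v hv
  refine hB hvu hvu_re (hAB u ((closedBall_subset_ball' ?_).trans hρA))
  linarith [mem_closedBall.1 hu]

lemma exists_erosionClose_of_tendstoUniformlyOn {ι : Type*} {l : Filter ι} [l.NeBot]
    {U : Set ℂ} {Φ : ι → ℂ → ℂ} {Φlim : ℂ → ℂ} (hU : IsOpen U)
    (hΦ : ∀ n, DifferentiableOn ℂ (Φ n) U) (hinj : ∀ n, InjOn (Φ n) U)
    (hconv : TendstoUniformlyOn Φ Φlim l U) (hlim : DifferentiableOn ℂ Φlim U)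
    (hliminj : InjOn Φlim U) {ε : ℝ} (hε : 0 < ε) :
    ∃ n, ErosionClose ε (Φlim '' U) (Φ n '' U) := by
  obtain ⟨n, hn⟩ := (tendstoUniformlyOn_iff.1 hconv (ε / 2) (half_pos hε)).exists
  exact ⟨n,
    fun w hw ↦ mem_image_of_closedBall_subset_image hU hlim (hΦ n) hliminj hε hw hn,
    fun w hw ↦ mem_image_of_closedBall_subset_image hU (hΦ n) hlim (hinj n) hε hw
      fun z hz ↦ by rw [dist_comm]; exact hn z hz⟩

end Approximation

theorem stmt2_general {ι : Type*} {l : Filter ι} [l.NeBot] {U : Set ℂ} {z₀ : ℂ}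
    {Ω : ι → Set ℂ} {Φ : ι → ℂ → ℂ} {Φlim : ℂ → ℂ} {Ωlim : Set ℂ}
    (hU : IsOpen U) (hz₀ : z₀ ∈ U)
    (hsymm : ∀ n, SymmetricDomain (Ω n))
    (hΦhol : ∀ n, DifferentiableOn ℂ (Φ n) U)
    (hΦbij : ∀ n, BijOn (Φ n) U (Ω n))
    (hΦ0 : ∀ n, Φ n z₀ = 0)
    (hconv : TendstoUniformlyOn Φ Φlim l U)
    (hlimbij : BijOn Φlim U Ωlim) :
    SymmetricDomain Ωlim := by
  have hlimhol : DifferentiableOn ℂ Φlim U :=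
    hconv.tendstoLocallyUniformlyOn.differentiableOn (.of_forall hΦhol) hU
  have hlimopen : IsOpen Ωlim := by
    rw [← hlimbij.image_eq, ← range_domRestrict]
    exact (isOpenEmbedding_domRestrict_of_injOn hU hlimhol hlimbij.injOn).isOpen_range
  have hlim0 : Φlim z₀ = 0 :=
    tendsto_nhds_unique (hconv.tendsto_at hz₀) (by simp only [hΦ0, tendsto_const_nhds])
  refine CircularlySymmetric.symmetricDomain ?_ hlimopen (hlim0 ▸ hlimbij.mapsTo hz₀)
  refine .of_forall_exists_erosionClose hlimopen fun ε hε ↦ ?_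
  obtain ⟨n, hn⟩ := exists_erosionClose_of_tendstoUniformlyOn hU hΦhol
    (fun n ↦ (hΦbij n).injOn) hconv hlimhol hlimbij.injOn hε
  rw [hlimbij.image_eq, (hΦbij n).image_eq] at hn
  exact ⟨Ω n, (hsymm n).circularlySymmetric, hn⟩

theorem stmt2 (Ω : ℕ → Set ℂ) (Φ : ℕ → ℂ → ℂ) (Φlim : ℂ → ℂ) (Ωlim : Set ℂ)
    (hbdd : ∀ n, Bornology.IsBounded (Ω n))
    (hopen : ∀ n, IsOpen (Ω n))
    (hsc : ∀ n, SimplyConnectedSpace (Ω n))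
    (hzero : ∀ n, (0:ℂ) ∈ Ω n)
    (hsymm : ∀ n, SymmetricDomain (Ω n))
    (hΦhol : ∀ n, DifferentiableOn ℂ (Φ n) (ball (0:ℂ) 1))
    (hΦbij : ∀ n, Set.BijOn (Φ n) (ball (0:ℂ) 1) (Ω n))
    (hΦ0 : ∀ n, Φ n 0 = 0)
    (hΦ' : ∀ n, ∃ c : ℝ, 0 < c ∧ deriv (Φ n) 0 = (c : ℂ))
    (hconv : TendstoUniformlyOn Φ Φlim Filter.atTop (ball (0:ℂ) 1))
    (hlimhol : DifferentiableOn ℂ Φlim (ball (0:ℂ) 1))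
    (hlimbij : Set.BijOn Φlim (ball (0:ℂ) 1) Ωlim)
    (hlimopen : IsOpen Ωlim)
    (hlimsc : SimplyConnectedSpace Ωlim) :
    SymmetricDomain Ωlim :=
  stmt2_general isOpen_ball (mem_ball_self one_pos) hsymm hΦhol hΦbij hΦ0 hconv hlimbij
end

section
/- Let Ω ⊆ ℂ be an open, simply connected set and let r > 0. Suppose that the two open sets Ω ∩ B(0,r) and Ω \ closure(B(0,r)) are both path-connected. Then the set Ω ∩ ∂B(0,r) is path-connected; moreover, any two points z, w ∈ Ω ∩ ∂B(0,r) can be joined by an arc of the circle ∂B(0,r) that is contained in Ω. -/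
open Complex Metric Set

/-!
The key is the unicoherence of a simply connected space `X`: if closed connected sets `A` and `B`
cover `X`, then `A ∩ B` is connected. Otherwise Urysohn's lemma yields a function `g` equal to `0`
on one part of `A ∩ B` and to `1` on the rest, so that `g` modulo `1` on `A` and `0` on `B` glue to
a map from `X` to the circle. A lift `F` of this map to `ℝ` is constant on `B`, while `F - g` is
constant on `A`; hence `g` is constant on `A ∩ B`, a contradiction.

Apply this in `Ω` to the closed ball and to the complement of the open ball, whose traces on the
open set `Ω` lie between a connected set and its closure. The sphere is locally path-connected,
being a retract of the punctured space, so connectedness of its open subset `Ω ∩ sphere` upgrades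
to path-connectedness.
-/

theorem exists_continuousMap_eqOn_of_isClosed_cover {X Y : Type*} [TopologicalSpace X]
    [TopologicalSpace Y] {A B : Set X} (hA : IsClosed A) (hB : IsClosed B) (hAB : A ∪ B = univ)
    {f g : X → Y} (hf : ContinuousOn f A) (hg : ContinuousOn g B) (hfg : EqOn f g (A ∩ B)) :
    ∃ h : C(X, Y), EqOn h f A ∧ EqOn h g B := by
  classical
  have eqOn_A : EqOn (A.piecewise f g) f A := A.piecewise_eqOn f g
  have eqOn_B : EqOn (A.piecewise f g) g B := fun x hxB ↦ by
    by_cases hxA : x ∈ A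
    · rw [eqOn_A hxA, hfg ⟨hxA, hxB⟩]
    · exact piecewise_eq_of_notMem A f g hxA
  have continuousOn_union : ContinuousOn (A.piecewise f g) (A ∪ B) :=
    (hf.congr eqOn_A).union_of_isClosed (hg.congr eqOn_B) hA hB
  rw [hAB, continuousOn_univ] at continuousOn_union
  exact ⟨⟨_, continuousOn_union⟩, eqOn_A, eqOn_B⟩

section Unicoherence

variable {X : Type*} [TopologicalSpace X] [SimplyConnectedSpace X] [LocallyPathConnectedSpace X]
  {A B : Set X}

theorem exists_continuousMap_lift_of_isCoveringMap {Y Z : Type*} [TopologicalSpace Y]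
    [TopologicalSpace Z] {p : Y → Z} (hp : IsCoveringMap p) (hsurj : Function.Surjective p)
    (f : C(X, Z)) : ∃ F : C(X, Y), ∀ x, p (F x) = f x := by
  obtain ⟨x₀⟩ : Nonempty X := inferInstance
  obtain ⟨y₀, hy₀⟩ := hsurj (f x₀)
  obtain ⟨F, ⟨-, hF⟩, -⟩ := hp.existsUnique_continuousMap_lifts f x₀ y₀ hy₀
  exact ⟨F, congrFun hF⟩

theorem eq_of_coe_unitAddCircle_eq_zero_on_inter (hA : IsClosed A) (hB : IsClosed B)
    (hAB : A ∪ B = univ) (hA' : IsPreconnected A) (hB' : IsPreconnected B) {g : X → ℝ}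
    (hg : ContinuousOn g A) (hg₀ : ∀ x ∈ A ∩ B, (g x : UnitAddCircle) = 0)
    {x y : X} (hx : x ∈ A ∩ B) (hy : y ∈ A ∩ B) : g x = g y := by
  obtain ⟨f, hfA, hfB⟩ := exists_continuousMap_eqOn_of_isClosed_cover hA hB hAB
    (f := fun x ↦ (g x : UnitAddCircle)) (g := 0)
    ((AddCircle.continuous_mk' 1).comp_continuousOn hg) continuousOn_const hg₀
  have isCoveringMap := AddCircle.isCoveringMap_coe (1 : ℝ)
  obtain ⟨F, hF⟩ := exists_continuousMap_lift_of_isCoveringMap isCoveringMap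
    QuotientAddGroup.mk_surjective f
  have F_eq : F x = F y := by
    refine isCoveringMap.constOn_of_comp hB' F.continuous.continuousOn (fun z hz w hw ↦ ?_)
      hx.2 hy.2
    rw [hF, hF, hfB hz, hfB hw, Pi.zero_apply, Pi.zero_apply]
  have F_sub_g_eq : F x - g x = F y - g y := by
    refine isCoveringMap.constOn_of_comp (g := fun z ↦ F z - g z) hA'
      (F.continuous.continuousOn.sub hg) (fun z hz w hw ↦ ?_) hx.1 hy.1
    rw [AddCircle.coe_sub, AddCircle.coe_sub, hF, hF, hfA hz, hfA hw, sub_self, sub_self]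
  linarith

theorem isPreconnected_inter_of_isClosed_cover [NormalSpace X] (hA : IsClosed A) (hB : IsClosed B)
    (hAB : A ∪ B = univ) (hA' : IsPreconnected A) (hB' : IsPreconnected B) :
    IsPreconnected (A ∩ B) := by
  rw [isPreconnected_iff_subset_of_fully_disjoint_closed (hA.inter hB)]
  intro K L hK hL hKL hdisj
  obtain ⟨g, hgK, hgL, -⟩ := exists_continuous_zero_one_of_isClosed hK hL hdisj
  have coe_g_eq_zero : ∀ x ∈ A ∩ B, (g x : UnitAddCircle) = 0 := fun x hx ↦ by
    rcases hKL hx with hxK | hxL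
    · rw [hgK hxK, Pi.zero_apply, AddCircle.coe_zero]
    · rw [hgL hxL, Pi.one_apply, AddCircle.coe_period]
  by_contra! ⟨hnotK, hnotL⟩
  obtain ⟨x, hx, hxK⟩ := not_subset.1 hnotK
  obtain ⟨y, hy, hyL⟩ := not_subset.1 hnotL
  have g_eq : g x = g y := eq_of_coe_unitAddCircle_eq_zero_on_inter hA hB hAB hA' hB'
    g.continuous.continuousOn coe_g_eq_zero hx hy
  rw [hgL ((hKL hx).resolve_left hxK), hgK ((hKL hy).resolve_right hyL)] at g_eq
  exact one_ne_zero g_eq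

theorem isConnected_inter_of_isClosed_cover [NormalSpace X] (hA : IsClosed A) (hB : IsClosed B)
    (hAB : A ∪ B = univ) (hA' : IsConnected A) (hB' : IsConnected B) : IsConnected (A ∩ B) := by
  refine ⟨?_, isPreconnected_inter_of_isClosed_cover hA hB hAB hA'.2 hB'.2⟩
  simpa only [univ_inter] using isPreconnected_closed_iff.1 isPreconnected_univ A B hA hB hAB.ge
    (by simpa only [univ_inter] using hA'.1) (by simpa only [univ_inter] using hB'.1)

end Unicoherence

section Traces

variable {X : Type*} [TopologicalSpace X] {S U : Set X}

theorem isConnected_preimage_coe_iff : IsConnected ((↑) ⁻¹' S : Set U) ↔ IsConnected (U ∩ S) := by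
  rw [← Subtype.image_preimage_coe, IsConnected, IsConnected, image_nonempty,
    Topology.IsInducing.subtypeVal.isPreconnected_image]

theorem isConnected_inter_closure (hU : IsOpen U) (h : IsConnected (U ∩ S)) :
    IsConnected (U ∩ closure S) :=
  h.subset_closure (inter_subset_inter_right U subset_closure) hU.inter_closure

theorem isPathConnected_inter_of_isConnected [LocallyPathConnectedSpace S] (hU : IsOpen U)
    (h : IsConnected (S ∩ U)) : IsPathConnected (S ∩ U) := by
  have isPathConnected_preimage : IsPathConnected ((↑) ⁻¹' U : Set S) :=
    (hU.preimage continuous_subtype_val).isConnected_iff_isPathConnected.1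
      (isConnected_preimage_coe_iff.2 h)
  rw [← Subtype.image_preimage_coe]
  exact isPathConnected_preimage.image continuous_subtype_val

theorem isConnected_inter_inter_of_isClosed_cover {A B : Set X} [SimplyConnectedSpace U]
    [LocallyPathConnectedSpace U] [NormalSpace U] (hA : IsClosed A) (hB : IsClosed B)
    (hAB : U ⊆ A ∪ B) (hUA : IsConnected (U ∩ A)) (hUB : IsConnected (U ∩ B)) :
    IsConnected (U ∩ (A ∩ B)) := by
  rw [← isConnected_preimage_coe_iff] at hUA hUB ⊢
  exact isConnected_inter_of_isClosed_cover (hA.preimage continuous_subtype_val)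
    (hB.preimage continuous_subtype_val) (eq_univ_of_forall fun x ↦ hAB x.2) hUA hUB

end Traces

section Sphere

variable {E : Type*} [NormedAddCommGroup E] [NormedSpace ℝ E] {c : E} {r : ℝ}

theorem locallyPathConnectedSpace_sphere (hr : 0 < r) :
    LocallyPathConnectedSpace (sphere c r) := by
  have : LocallyPathConnectedSpace ({c}ᶜ : Set E) :=
    isOpen_compl_singleton.locallyPathConnectedSpace
  have norm_sub_ne_zero (x : ({c}ᶜ : Set E)) : ‖(x : E) - c‖ ≠ 0 :=
    norm_ne_zero_iff.2 (sub_ne_zero.2 x.2)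
  let inclusion : sphere c r → ({c}ᶜ : Set E) := fun x ↦ ⟨x, ne_of_mem_sphere x.2 hr.ne'⟩
  let retraction : ({c}ᶜ : Set E) → sphere c r := fun x ↦
    ⟨c + (r / ‖(x : E) - c‖) • ((x : E) - c), by
      rw [mem_sphere_iff_norm, add_sub_cancel_left, norm_smul, norm_div, norm_norm,
        div_mul_cancel₀ _ (norm_sub_ne_zero x), Real.norm_of_nonneg hr.le]⟩
  have continuous_retraction : Continuous retraction := by
    refine Continuous.subtype_mk ?_ _
    fun_prop (disch := exact norm_sub_ne_zero _)
  have leftInverse : Function.LeftInverse retraction inclusion := fun x ↦ Subtype.ext <| by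
    simp only [retraction, inclusion, mem_sphere_iff_norm.1 x.2, div_self hr.ne', one_smul,
      add_sub_cancel]
  exact (Topology.IsQuotientMap.of_inverse (continuous_subtype_val.subtype_mk _)
    continuous_retraction leftInverse).locallyPathConnectedSpace

theorem isConnected_inter_sphere {Ω : Set E} [SimplyConnectedSpace Ω] (hΩ : IsOpen Ω)
    (hball : IsConnected (Ω ∩ ball c r)) (hcompl : IsConnected (Ω \ closedBall c r)) :
    IsConnected (Ω ∩ sphere c r) := by
  have hr : r ≠ 0 := (nonempty_ball.1 hball.nonempty.right).ne'
  have : LocallyPathConnectedSpace Ω := hΩ.locallyPathConnectedSpace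
  have hclosedBall : IsConnected (Ω ∩ closedBall c r) := by
    rw [← closure_ball c hr]
    exact isConnected_inter_closure hΩ hball
  have hcompl_ball : IsConnected (Ω ∩ (ball c r)ᶜ) := by
    rw [← interior_closedBall c hr, ← closure_compl]
    exact isConnected_inter_closure hΩ hcompl
  have hcover : Ω ⊆ closedBall c r ∪ (ball c r)ᶜ := fun x _ ↦
    (em (x ∈ ball c r)).imp_left (ball_subset_closedBall ·)
  rw [← closedBall_sdiff_ball, sdiff_eq]
  exact isConnected_inter_inter_of_isClosed_cover isClosed_closedBall isOpen_ball.isClosed_compl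
    hcover hclosedBall hcompl_ball

theorem stmt3_general {Ω : Set E} [SimplyConnectedSpace Ω] (hΩ : IsOpen Ω)
    (hball : IsConnected (Ω ∩ ball c r)) (hcompl : IsConnected (Ω \ closedBall c r)) :
    IsPathConnected (Ω ∩ sphere c r) := by
  have hr : 0 < r := nonempty_ball.1 hball.nonempty.right
  have := locallyPathConnectedSpace_sphere (c := c) hr
  have isConnected := isConnected_inter_sphere hΩ hball hcompl
  rw [inter_comm] at isConnected ⊢
  exact isPathConnected_inter_of_isConnected hΩ isConnected

end Sphere

theorem stmt3 (Ω : Set ℂ) (r : ℝ) (hr : 0 < r)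
    (hopen : IsOpen Ω) (hsc : SimplyConnectedSpace Ω)
    (h1 : IsPathConnected (Ω ∩ ball (0:ℂ) r))
    (h2 : IsPathConnected (Ω \ closedBall (0:ℂ) r)) :
    IsPathConnected (Ω ∩ sphere (0:ℂ) r) ∧
    ∀ z ∈ Ω ∩ sphere (0:ℂ) r, ∀ w ∈ Ω ∩ sphere (0:ℂ) r,
      ∃ A : Set ℂ, A ⊆ sphere (0:ℂ) r ∧ A ⊆ Ω ∧ IsConnected A ∧ z ∈ A ∧ w ∈ A := by
  have h := stmt3_general hopen h1.isConnected h2.isConnected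
  exact ⟨h, fun z hz w hw ↦ ⟨_, inter_subset_right, inter_subset_left, h.isConnected, hz, hw⟩⟩
end

section
/- Let Ω ⊆ ℂ be a bounded, connected open set that is symmetric in the following sense: 0 ∈ Ω, Ω is invariant under complex conjugation, and for every r > 0 the set ∂B(0,r) \ Ω is either empty or a connected closed set containing a point on the positive real axis. Let μ and M be the largest and smallest positive numbers, respectively, such that B(0,μ) ⊆ Ω ⊆ B(0,M). Then μ ∉ Ω and the real interval (−M, μ) is contained in Ω. If in addition Ω is simply connected or ℂ \ Ω is simply connected, then Ω contains no point of the real interval [μ, M], i.e. Ω ∩ [μ, M] = ∅. -/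
open Complex Metric Set

/-!
A circle about `0` that meets the positive real axis inside `Ω` lies entirely in `Ω`, and a circle
that meets `Ω` at all has its negative real point in `Ω`: otherwise its trace on the complement is
a connected, conjugation-invariant set joining `-r` to `r`, hence the whole circle. The first fact
gives `μ ∉ Ω`, since otherwise `Ω` contains a closed disk of the maximal radius; the second gives
`(-M, 0] ⊆ Ω`, since the connected set `Ω` meets every circle of radius less than `M`.

Finally, a point `t > μ` of `Ω` on the real axis yields a circle in `Ω` around `μ ∉ Ω`. If `Ω` is
simply connected, a branch of `log (z - μ)` on `Ω` would be a primitive of `1 / (z - μ)`, whose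
integral over that circle is `2πi ≠ 0`. If `ℂ \ Ω` is connected, it has to cross the circle.
-/

section Metric

variable {X : Type*} [PseudoMetricSpace X] {s : Set X} {x y c : X} {r : ℝ}

theorem inter_sphere_nonempty_of_isPreconnected (hs : IsPreconnected s) (hx : x ∈ s) (hy : y ∈ s)
    (hxr : dist x c ≤ r) (hyr : r ≤ dist y c) : (s ∩ sphere c r).Nonempty :=
  hs.intermediate_value hx hy (continuous_id.dist continuous_const).continuousOn ⟨hxr, hyr⟩

theorem closedBall_subset_of_sphere_subset_of_isPreconnected_compl
    [(Bornology.cobounded X).NeBot] (hbdd : Bornology.IsBounded s) (hs : IsPreconnected sᶜ)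
    (hsphere : sphere c r ⊆ s) : closedBall c r ⊆ s := by
  intro w hwr
  by_contra hw
  obtain ⟨y, hy⟩ := Filter.nonempty_of_mem (hbdd.union (isBounded_closedBall (x := c) (r := r)))
  rw [compl_union] at hy
  obtain ⟨z, hz, hzr⟩ := inter_sphere_nonempty_of_isPreconnected hs hw hy.1 hwr
    (not_le.1 (notMem_of_mem_compl hy.2)).le
  exact hz (hsphere hzr)

end Metric

theorem exists_gt_ball_subset_of_closedBall_subset {E : Type*} [SeminormedAddCommGroup E]
    [NormedSpace ℝ E] [ProperSpace E] {U : Set E} {c : E} {r : ℝ} (hU : IsOpen U) (hr : 0 ≤ r)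
    (hsub : closedBall c r ⊆ U) : ∃ r' > r, ball c r' ⊆ U := by
  obtain ⟨δ, hδ, hthick⟩ := (isCompact_closedBall c r).exists_thickening_subset_open hU hsub
  rw [thickening_closedBall hδ hr] at hthick
  exact ⟨δ + r, lt_add_of_pos_left r hδ, hthick⟩

theorem hasDerivAt_of_exp_comp_eventuallyEq {f g : ℂ → ℂ} {g' z : ℂ} (hf : ContinuousAt f z)
    (hfg : exp ∘ f =ᶠ[nhds z] g) (hg : HasDerivAt g g' z) : HasDerivAt f (g' / g z) z := by
  have hgz : g z ≠ 0 := hfg.eq_of_nhds ▸ exp_ne_zero (f z)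
  have him : ∀ᶠ y in nhds z, (f y - f z).im ∈ Ioo (-Real.pi) Real.pi :=
    (continuous_im.continuousAt.comp (hf.sub continuousAt_const)).eventually_mem
      (isOpen_Ioo.mem_nhds (by simp [Real.pi_pos]))
  have hlog : f =ᶠ[nhds z] fun y ↦ f z + log (g y / g z) := by
    filter_upwards [hfg, him] with y hy hyim
    rw [← hy, ← hfg.eq_of_nhds, Function.comp_apply, Function.comp_apply, ← exp_sub,
      log_exp hyim.1 hyim.2.le, add_sub_cancel]
  have hderiv := ((hg.div_const (g z)).clog (by simp [hgz])).const_add (f z)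
  rw [div_self hgz, div_one] at hderiv
  exact hderiv.congr_of_eventuallyEq hlog

theorem closedBall_subset_of_sphere_subset_of_isSimplyConnected {U : Set ℂ} {c : ℂ} {r : ℝ}
    (hU : IsOpen U) (hsc : IsSimplyConnected U) (hsphere : sphere c r ⊆ U) :
    closedBall c r ⊆ U := by
  intro w hwr
  by_contra hw
  have hwball : w ∈ ball c r := lt_of_le_of_ne hwr fun h ↦ hw (hsphere h)
  have hr : 0 ≤ r := dist_nonneg.trans hwr
  obtain ⟨f, hfc, hf⟩ : ∃ f : ℂ → ℂ, ContinuousOn f U ∧ EqOn (exp ∘ f) (fun z ↦ z - w) U :=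
    exists_continuousOn_eqOn_exp_comp hsc hU (by fun_prop)
      fun ⟨z, hz, hzw⟩ ↦ hw (sub_eq_zero.1 hzw ▸ hz)
  have hderiv : ∀ z ∈ U, HasDerivAt f (z - w)⁻¹ z := fun z hz ↦ by
    simpa only [one_div] using hasDerivAt_of_exp_comp_eventuallyEq
      (hfc.continuousAt (hU.mem_nhds hz)) (hf.eventuallyEq_of_mem (hU.mem_nhds hz))
      ((hasDerivAt_id z).sub_const w)
  have hint : (∮ z in C(c, r), (z - w)⁻¹) = 0 :=
    circleIntegral.integral_eq_zero_of_hasDerivWithinAt hr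
      fun z hz ↦ (hderiv z (hsphere hz)).hasDerivWithinAt
  rw [circleIntegral.integral_sub_inv_of_mem_ball hwball] at hint
  exact two_pi_I_ne_zero hint

theorem eq_or_eq_conj_of_re_eq_of_norm_eq {z w : ℂ} (hre : z.re = w.re) (hnorm : ‖z‖ = ‖w‖) :
    z = w ∨ z = starRingEnd ℂ w := by
  have him : z.im ^ 2 = w.im ^ 2 := by
    rw [← sq_norm_sub_sq_re, ← sq_norm_sub_sq_re, hre, hnorm]
  rcases sq_eq_sq_iff_eq_or_eq_neg.1 him with him | him
  · exact .inl (Complex.ext hre him)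
  · exact .inr (Complex.ext hre him)

theorem sphere_subset_of_isPreconnected_of_conj_mem {s : Set ℂ} {r : ℝ} (hs : IsPreconnected s)
    (hsub : s ⊆ sphere 0 r) (hconj : ∀ z ∈ s, starRingEnd ℂ z ∈ s) (hpos : (r : ℂ) ∈ s)
    (hneg : ((-r : ℝ) : ℂ) ∈ s) : sphere 0 r ⊆ s := by
  intro z hz
  have hzr : ‖z‖ = r := mem_sphere_zero_iff_norm.1 hz
  obtain ⟨y, hy, hyz⟩ : ∃ y ∈ s, y.re = z.re :=
    hs.intermediate_value hneg hpos continuous_re.continuousOn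
      (abs_le.1 (hzr ▸ abs_re_le_norm z))
  have hyr : ‖y‖ = r := mem_sphere_zero_iff_norm.1 (hsub hy)
  rcases eq_or_eq_conj_of_re_eq_of_norm_eq hyz.symm (hzr.trans hyr.symm) with rfl | rfl
  · exact hy
  · exact hconj y hy

namespace SymmetricDomain

variable {Ω : Set ℂ} {r s t : ℝ}

theorem ofReal_mem_sphere_sdiff_of_nonempty (h : SymmetricDomain Ω) (hr : 0 < r)
    (hne : (sphere (0 : ℂ) r \ Ω).Nonempty) : (r : ℂ) ∈ sphere (0 : ℂ) r \ Ω := by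
  rcases h.2.2 r hr with hempty | ⟨-, -, x, hx, hxmem⟩
  · exact absurd hempty hne.ne_empty
  · have hxr : x = r := by simpa [abs_of_pos hx] using hxmem.1
    rwa [hxr] at hxmem

theorem isPreconnected_sphere_sdiff (h : SymmetricDomain Ω) (hr : 0 < r) :
    IsPreconnected (sphere (0 : ℂ) r \ Ω) := by
  rcases h.2.2 r hr with hempty | ⟨-, hconn, -⟩
  · exact hempty ▸ isPreconnected_empty
  · exact hconn.isPreconnected

theorem conj_mem_sphere_sdiff (h : SymmetricDomain Ω) {z : ℂ} (hz : z ∈ sphere (0 : ℂ) r \ Ω) :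
    starRingEnd ℂ z ∈ sphere (0 : ℂ) r \ Ω :=
  ⟨by simpa using hz.1, fun hmem ↦ hz.2 ((h.2.1 z).2 hmem)⟩

theorem sphere_subset_of_ofReal_mem (h : SymmetricDomain Ω) (hr : 0 < r) (hmem : (r : ℂ) ∈ Ω) :
    sphere 0 r ⊆ Ω := by
  by_contra hsub
  exact (h.ofReal_mem_sphere_sdiff_of_nonempty hr (sdiff_nonempty.2 hsub)).2 hmem

theorem ofReal_neg_norm_mem (h : SymmetricDomain Ω) {z : ℂ} (hz : z ∈ Ω) :
    ((-‖z‖ : ℝ) : ℂ) ∈ Ω := by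
  rcases eq_or_ne z 0 with rfl | hz0
  · simpa using hz
  have hr : 0 < ‖z‖ := norm_pos_iff.2 hz0
  by_contra hneg
  have hneg' : ((-‖z‖ : ℝ) : ℂ) ∈ sphere (0 : ℂ) ‖z‖ \ Ω := ⟨by simp, hneg⟩
  have hsphere : sphere (0 : ℂ) ‖z‖ ⊆ sphere 0 ‖z‖ \ Ω :=
    sphere_subset_of_isPreconnected_of_conj_mem (h.isPreconnected_sphere_sdiff hr) sdiff_subset
      (fun _ ↦ h.conj_mem_sphere_sdiff) (h.ofReal_mem_sphere_sdiff_of_nonempty hr ⟨_, hneg'⟩) hneg'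
  exact (hsphere (mem_sphere_zero_iff_norm.2 rfl)).2 hz

theorem ofReal_neg_mem_of_not_subset_ball (h : SymmetricDomain Ω) (hconn : IsPreconnected Ω)
    (hr : 0 ≤ r) (hsub : ¬Ω ⊆ ball 0 r) : ((-r : ℝ) : ℂ) ∈ Ω := by
  obtain ⟨y, hy, hyr⟩ := not_subset.1 hsub
  obtain ⟨z, hz, hzr⟩ := inter_sphere_nonempty_of_isPreconnected hconn h.1 hy
    (by simpa using hr) (not_lt.1 hyr)
  rw [← mem_sphere_zero_iff_norm.1 hzr]
  exact h.ofReal_neg_norm_mem hz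

theorem ofReal_notMem_of_isGreatest (h : SymmetricDomain Ω) (hopen : IsOpen Ω)
    (hr : IsGreatest {t : ℝ | 0 < t ∧ ball (0 : ℂ) t ⊆ Ω} r) : (r : ℂ) ∉ Ω := by
  obtain ⟨⟨hr0, hball⟩, hmax⟩ := hr
  intro hmem
  have hclosedBall : closedBall (0 : ℂ) r ⊆ Ω := by
    rw [← ball_union_sphere]
    exact union_subset hball (h.sphere_subset_of_ofReal_mem hr0 hmem)
  obtain ⟨r', hrr', hball'⟩ := exists_gt_ball_subset_of_closedBall_subset hopen hr0.le hclosedBall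
  exact hrr'.not_ge (hmax ⟨hr0.trans hrr', hball'⟩)

theorem ofReal_notMem_of_le (h : SymmetricDomain Ω)
    (hfill : ∀ t : ℝ, sphere (0 : ℂ) t ⊆ Ω → closedBall (0 : ℂ) t ⊆ Ω) (hs0 : 0 < s)
    (hs : (s : ℂ) ∉ Ω) (hst : s ≤ t) : (t : ℂ) ∉ Ω := fun ht ↦
  hs <| hfill t (h.sphere_subset_of_ofReal_mem (hs0.trans_le hst) ht) <| by
    simpa [abs_of_pos hs0] using hst

end SymmetricDomain

theorem stmt6_general (Ω : Set ℂ) (μ M : ℝ) (hopen : IsOpen Ω) (hconn : IsPreconnected Ω)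
    (hsymm : SymmetricDomain Ω)
    (hμ : IsGreatest {t : ℝ | 0 < t ∧ ball (0 : ℂ) t ⊆ Ω} μ)
    (hM : IsLeast {t : ℝ | 0 < t ∧ Ω ⊆ ball (0 : ℂ) t} M) :
    (μ : ℂ) ∉ Ω ∧
    (fun x : ℝ => (x : ℂ)) '' Ioo (-M) μ ⊆ Ω ∧
    (IsSimplyConnected Ω ∨ IsPreconnected Ωᶜ →
      Ω ∩ (fun x : ℝ => (x : ℂ)) '' Icc μ M = ∅) := by
  have hμΩ : (μ : ℂ) ∉ Ω := hsymm.ofReal_notMem_of_isGreatest hopen hμ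
  refine ⟨hμΩ, ?_, fun hsc ↦ ?_⟩
  · rintro _ ⟨x, ⟨hMx, hxμ⟩, rfl⟩
    rcases le_or_gt 0 x with hx | hx
    · exact hμ.1.2 (by simpa [abs_of_nonneg hx] using hxμ)
    · have hsub : ¬Ω ⊆ ball 0 (-x) := fun hsub ↦
        (neg_lt.1 hMx).not_ge (hM.2 ⟨neg_pos.2 hx, hsub⟩)
      simpa using hsymm.ofReal_neg_mem_of_not_subset_ball hconn (neg_pos.2 hx).le hsub
  · have hfill (t : ℝ) (ht : sphere (0 : ℂ) t ⊆ Ω) : closedBall (0 : ℂ) t ⊆ Ω :=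
      hsc.elim (closedBall_subset_of_sphere_subset_of_isSimplyConnected hopen · ht)
        (closedBall_subset_of_sphere_subset_of_isPreconnected_compl
          (isBounded_ball.subset hM.1.2) · ht)
    rw [← disjoint_iff_inter_eq_empty, disjoint_right]
    rintro _ ⟨t, ht, rfl⟩
    exact hsymm.ofReal_notMem_of_le hfill hμ.1.1 hμΩ ht.1

theorem stmt6 (Ω : Set ℂ) (μ M : ℝ)
    (hbdd : Bornology.IsBounded Ω) (hopen : IsOpen Ω) (hconn : IsConnected Ω)
    (hsymm : SymmetricDomain Ω)
    (hμ : IsGreatest {t : ℝ | 0 < t ∧ ball (0:ℂ) t ⊆ Ω} μ)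
    (hM : IsLeast {t : ℝ | 0 < t ∧ Ω ⊆ ball (0:ℂ) t} M) :
    ((μ : ℂ) ∉ Ω) ∧
    ((fun x : ℝ => (x:ℂ)) '' Set.Ioo (-M) μ ⊆ Ω) ∧
    ((SimplyConnectedSpace Ω ∨ SimplyConnectedSpace (Ωᶜ : Set ℂ)) →
      Ω ∩ ((fun x : ℝ => (x:ℂ)) '' Set.Icc μ M) = ∅) := by
  exact (stmt6_general Ω μ M hopen hconn.isPreconnected hsymm hμ hM).imp_right <| And.imp_right
    (· ∘ Or.imp_right fun h : IsSimplyConnected Ωᶜ ↦ h.isPathConnected.isConnected.isPreconnected)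
end

section
/- For every real number c ≥ 0 and every θ_0 ∈ [0, π/2), the following inequality holds: ∫₀^{π/2} arctan( c / cos θ ) dθ ≤ c·log( 2 / cos θ_0 ) + (π²/4)·cos θ_0. -/
open Real

/-!
Split the integral at `θ0`. On `[0, θ0]`, `arctan x ≤ x` bounds it by `c` times the integral of the
secant, which is `log ((1 + sin θ0) / cos θ0) ≤ log (2 / cos θ0)`. On `[θ0, π / 2]`, the bound
`arctan ≤ π / 2` leaves the length of the interval, which Jordan's inequality bounds by
`(π / 2) * cos θ0`.
-/

open MeasureTheory Set
open scoped Interval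

section Arctan

variable {a b : ℝ} {f : ℝ → ℝ} {μ : Measure ℝ}

lemma arctan_le_self {x : ℝ} (hx : 0 ≤ x) : arctan x ≤ x := by
  simpa only [tan_arctan] using le_tan (arctan_nonneg.2 hx) (arctan_lt_pi_div_two x)

lemma abs_arctan_le_pi_div_two (x : ℝ) : |arctan x| ≤ π / 2 :=
  abs_le.2 ⟨(neg_pi_div_two_lt_arctan x).le, (arctan_lt_pi_div_two x).le⟩

lemma intervalIntegrable_arctan_comp [IsLocallyFiniteMeasure μ]
    (hf : AEStronglyMeasurable f (μ.restrict (Ι a b))) :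
    IntervalIntegrable (fun x ↦ arctan (f x)) μ a b := by
  refine (intervalIntegrable_const (c := π / 2)).mono_fun
    (continuous_arctan.comp_aestronglyMeasurable hf) (.of_forall fun x ↦ ?_)
  simpa only [norm_eq_abs, abs_of_pos pi_div_two_pos] using abs_arctan_le_pi_div_two (f x)

lemma integral_arctan_comp_le_integral [IsLocallyFiniteMeasure μ] (hab : a ≤ b)
    (hf : IntervalIntegrable f μ a b) (hf_nonneg : ∀ x ∈ Icc a b, 0 ≤ f x) :
    ∫ x in a..b, arctan (f x) ∂μ ≤ ∫ x in a..b, f x ∂μ :=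
  intervalIntegral.integral_mono_on hab
    (intervalIntegrable_arctan_comp hf.aestronglyMeasurable_restrict_uIoc) hf
    fun x hx ↦ arctan_le_self (hf_nonneg x hx)

lemma integral_arctan_comp_le_pi_div_two_mul (hab : a ≤ b) :
    ∫ x in a..b, arctan (f x) ≤ π / 2 * (b - a) := by
  have hnorm : ‖∫ x in a..b, arctan (f x)‖ ≤ π / 2 * |b - a| :=
    intervalIntegral.norm_integral_le_of_norm_le_const fun x _ ↦ abs_arctan_le_pi_div_two (f x)
  rw [abs_of_nonneg (sub_nonneg.2 hab)] at hnorm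
  exact (le_norm_self _).trans hnorm

end Arctan

section Secant

lemma one_add_sin_ne_zero {x : ℝ} (hx : cos x ≠ 0) : 1 + sin x ≠ 0 := fun h ↦
  hx <| pow_eq_zero_iff two_ne_zero |>.1 <| by
    linear_combination sin_sq_add_cos_sq x + (1 - sin x) * h

lemma hasDerivAt_log_one_add_sin_div_cos {x : ℝ} (hx : cos x ≠ 0) :
    HasDerivAt (fun y ↦ log ((1 + sin y) / cos y)) (cos x)⁻¹ x := by
  have hsin : 1 + sin x ≠ 0 := one_add_sin_ne_zero hx
  have hquot : HasDerivAt (fun y ↦ (1 + sin y) / cos y) ((1 + sin x) / cos x ^ 2) x :=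
    (((hasDerivAt_sin x).const_add 1).div (hasDerivAt_cos x) hx).congr_deriv <| by
      congr 1
      linear_combination sin_sq_add_cos_sq x
  exact (hquot.log (div_ne_zero hsin hx)).congr_deriv (by field_simp)

lemma intervalIntegrable_inv_cos {a b : ℝ} (h : ∀ x ∈ [[a, b]], cos x ≠ 0) :
    IntervalIntegrable (fun x ↦ (cos x)⁻¹) volume a b :=
  intervalIntegral.intervalIntegrable_inv h continuousOn_cos

lemma integral_inv_cos {a b : ℝ} (h : ∀ x ∈ [[a, b]], cos x ≠ 0) :
    ∫ x in a..b, (cos x)⁻¹ = log ((1 + sin b) / cos b) - log ((1 + sin a) / cos a) :=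
  intervalIntegral.integral_eq_sub_of_hasDerivAt
    (fun x hx ↦ hasDerivAt_log_one_add_sin_div_cos (h x hx)) (intervalIntegrable_inv_cos h)

variable {θ : ℝ}

lemma cos_pos_of_mem_uIcc_zero (hθ : θ ∈ Ioo (-(π / 2)) (π / 2)) {x : ℝ} (hx : x ∈ [[0, θ]]) :
    0 < cos x :=
  have zero_mem : (0 : ℝ) ∈ Ioo (-(π / 2)) (π / 2) := ⟨by linarith [pi_pos], pi_div_two_pos⟩
  cos_pos_of_mem_Ioo (ordConnected_Ioo.uIcc_subset zero_mem hθ hx)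

lemma integral_inv_cos_le_log_two_div_cos (hθ : θ ∈ Ioo (-(π / 2)) (π / 2)) :
    ∫ x in 0..θ, (cos x)⁻¹ ≤ log (2 / cos θ) := by
  have hcos : 0 < cos θ := cos_pos_of_mem_Ioo hθ
  have hsin : 0 < 1 + sin θ :=
    lt_of_le_of_ne (by linarith [neg_one_le_sin θ]) (one_add_sin_ne_zero hcos.ne').symm
  calc ∫ x in 0..θ, (cos x)⁻¹
      = log ((1 + sin θ) / cos θ) := by
        rw [integral_inv_cos fun x hx ↦ (cos_pos_of_mem_uIcc_zero hθ hx).ne']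
        simp
    _ ≤ log (2 / cos θ) := by
        gcongr
        linarith [sin_le_one θ]

end Secant

section Split

variable {c θ : ℝ}

lemma integral_arctan_div_cos_le_mul_log (hc : 0 ≤ c) (hθ : 0 ≤ θ) (hθ' : θ < π / 2) :
    ∫ x in 0..θ, arctan (c / cos x) ≤ c * log (2 / cos θ) := by
  have hθ_mem : θ ∈ Ioo (-(π / 2)) (π / 2) := ⟨by linarith [pi_pos], hθ'⟩
  have hcos : ∀ x ∈ [[0, θ]], 0 < cos x := fun x hx ↦ cos_pos_of_mem_uIcc_zero hθ_mem hx
  have hint : IntervalIntegrable (fun x ↦ c / cos x) volume 0 θ :=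
    (intervalIntegrable_inv_cos fun x hx ↦ (hcos x hx).ne').const_mul c
  calc ∫ x in 0..θ, arctan (c / cos x)
      ≤ ∫ x in 0..θ, c / cos x :=
        integral_arctan_comp_le_integral hθ hint
          fun x hx ↦ div_nonneg hc (hcos x (Icc_subset_uIcc hx)).le
    _ = c * ∫ x in 0..θ, (cos x)⁻¹ := by
        simp only [div_eq_mul_inv, intervalIntegral.integral_const_mul]
    _ ≤ c * log (2 / cos θ) := by
        gcongr
        exact integral_inv_cos_le_log_two_div_cos hθ_mem

lemma pi_div_two_sub_le_mul_cos (hθ : 0 ≤ θ) (hθ' : θ ≤ π / 2) :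
    π / 2 - θ ≤ π / 2 * cos θ :=
  calc π / 2 - θ = π / 2 * (1 - 2 / π * θ) := by field_simp
    _ ≤ π / 2 * cos θ := by
        gcongr
        exact one_sub_mul_le_cos hθ hθ'

lemma integral_arctan_comp_le_mul_cos (f : ℝ → ℝ) (hθ : 0 ≤ θ) (hθ' : θ ≤ π / 2) :
    ∫ x in θ..(π / 2), arctan (f x) ≤ π ^ 2 / 4 * cos θ :=
  calc ∫ x in θ..(π / 2), arctan (f x)
      ≤ π / 2 * (π / 2 - θ) := integral_arctan_comp_le_pi_div_two_mul hθ'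
    _ ≤ π / 2 * (π / 2 * cos θ) := by
        gcongr
        exact pi_div_two_sub_le_mul_cos hθ hθ'
    _ = π ^ 2 / 4 * cos θ := by ring

end Split

theorem stmt13 (c θ0 : ℝ) (hc : 0 ≤ c) (hθ0 : 0 ≤ θ0) (hθ0' : θ0 < π / 2) :
    ∫ θ in (0:ℝ)..(π / 2), Real.arctan (c / Real.cos θ) ≤
      c * Real.log (2 / Real.cos θ0) + (π ^ 2 / 4) * Real.cos θ0 := by
  have hint (a b : ℝ) : IntervalIntegrable (fun θ ↦ arctan (c / cos θ)) volume a b :=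
    intervalIntegrable_arctan_comp (measurable_cos.const_div c).aestronglyMeasurable
  rw [← intervalIntegral.integral_add_adjacent_intervals (hint 0 θ0) (hint θ0 (π / 2))]
  exact add_le_add (integral_arctan_div_cos_le_mul_log hc hθ0 hθ0')
    (integral_arctan_comp_le_mul_cos _ hθ0 hθ0'.le)
end
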